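/- Let d ≥ 2, ℓ ≥ 0 and p ≥ 1 be integers. Then there is no r > 0 with J_{ℓ+d/2-1}(r) = 0 and J_{ℓ+p+d/2-1}(r) = 0, i.e. the Bessel functions J_{ℓ+d/2-1} and J_{ℓ+p+d/2-1} have no common positive zeros. -/

import Mathlib

/-- The Bessel function of the first kind `J_ν`, defined for real order `ν`
by its power series (interpreted with real powers `(x/2)^(2k+ν)`). -/
noncomputable def besselJ (ν x : ℝ) : ℝ :=
  ∑' k : ℕ, (-1 : ℝ) ^ k / (k.factorial * Real.Gamma ((k : ℝ) + ν + 1)) *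
    (x / 2) ^ (2 * (k : ℝ) + ν)

/-- `Ξ_ℓ^{(d)}(r) = r^{(2-d)/2} J_{ℓ + d/2 - 1}(r)`. -/
noncomputable def Xi (d ℓ : ℕ) (r : ℝ) : ℝ :=
  r ^ (((2 : ℝ) - d) / 2) * besselJ ((ℓ : ℝ) + (d : ℝ) / 2 - 1) r

/-!
By the three-term recurrence, if `r` is a common zero of `J_ν` and `J_(ν+p)`, then `(r/2)^2` is a
root of a Lommel polynomial, hence algebraic. Running the recurrence down to the lowest order
`ν₀`, which is `0` or `-1/2`, shows that the values of `J_(ν₀+1)` and `J_ν₀` at `r` are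
proportional over the algebraic numbers. This contradicts the transcendence of `exp` at algebraic
points if `ν₀ = -1/2`, and Siegel's theorem that `J₀'/J₀` is transcendental at algebraic points if
`ν₀ = 0`.

Both transcendence results come from Siegel's method. The pigeonhole principle gives a linear form
in the given functions, with polynomial coefficients of moderate size, that vanishes to high order
at the origin. Among its successive derivatives there are enough linearly independent ones, even
after evaluation, for one of them not to vanish at the algebraic values in question; its value is
then too small to be a nonzero algebraic number. The independence of the derivatives holds because
no proper subspace of forms over the rational functions is stable under differentiation. For `J₀`
and its derivative this follows from the logarithm in the second solution of Bessel's equation and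
from the fact that the associated Riccati equation has no rational solution.
-/

open Polynomial
open scoped Matrix

/-! ### Linear forms in the solutions of a differential system -/

section DifferentialForms

/-- Derivations over `ℤ`, taken with respect to the canonical `ℤ`-algebra structure; on polynomial
rings and power series this is not syntactically the one found by instance search. -/
abbrev IntDerivation (A : Type*) [CommRing A] := Derivation ℤ A A

/-- An additive map satisfying the Leibniz rule is a derivation over `ℤ`. -/
def IntDerivation.ofLeibniz {A : Type*} [CommRing A] (D : A →+ A)
    (h : ∀ x y, D (x * y) = x * D y + y * D x) : IntDerivation A :=
  Derivation.mk' D.toIntLinearMap h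

/-- The vector `φ` solves the linear differential system `D φ = a φ`. -/
def IsSolution {A ι : Type*} [CommRing A] [Fintype ι] (D : IntDerivation A) (a : Matrix ι ι A)
    (φ : ι → A) : Prop :=
  ∀ j, D (φ j) = (a *ᵥ φ) j

/-- The derivative of the linear form `P ⬝ᵥ φ` along the system `D φ = a φ`, in terms of the
coefficient vector `P`. -/
def formDeriv {A ι : Type*} [CommRing A] [Fintype ι] (D : IntDerivation A) (a : Matrix ι ι A) :
    (ι → A) →+ (ι → A) where
  toFun P i := D (P i) + (P ᵥ* a) i
  map_zero' := by
    ext i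
    simp
  map_add' P Q := by
    ext i
    simp only [Matrix.add_vecMul, Pi.add_apply, map_add]
    ring

/-- The square matrix whose rows are the successive derivatives of the linear form `P`. -/
def formMatrix {A : Type*} [CommRing A] {m : ℕ} (D : IntDerivation A)
    (a : Matrix (Fin m) (Fin m) A) (P : Fin m → A) : Matrix (Fin m) (Fin m) A :=
  Matrix.of fun k => (formDeriv D a)^[k] P

variable {A B ι : Type*} [CommRing A] [CommRing B] [Fintype ι]
  {D : IntDerivation A} {E : IntDerivation B} {a : Matrix ι ι A}

theorem formDeriv_apply (P : ι → A) (i : ι) : formDeriv D a P i = D (P i) + (P ᵥ* a) i := rfl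

theorem formDeriv_smul (c : A) (P : ι → A) :
    formDeriv D a (c • P) = c • formDeriv D a P + D c • P := by
  ext i
  simp only [formDeriv_apply, Matrix.smul_vecMul, Pi.add_apply, Pi.smul_apply, smul_eq_mul,
    Derivation.leibniz]
  ring

theorem IsSolution.formDeriv_dotProduct {φ : ι → A} (hφ : IsSolution D a φ) (P : ι → A) :
    formDeriv D a P ⬝ᵥ φ = D (P ⬝ᵥ φ) := by
  have hD : D (P ⬝ᵥ φ) = (fun i => D (P i)) ⬝ᵥ φ + P ⬝ᵥ (a *ᵥ φ) := by
    simp only [dotProduct, map_sum, Derivation.leibniz, smul_eq_mul, Finset.sum_add_distrib,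
      hφ _]
    rw [add_comm]
    exact congrArg (· + _) (Finset.sum_congr rfl fun i _ => mul_comm _ _)
  rw [hD, Matrix.dotProduct_mulVec, ← add_dotProduct]
  rfl

theorem IsSolution.iterate_formDeriv_dotProduct {φ : ι → A} (hφ : IsSolution D a φ) (P : ι → A)
    (k : ℕ) : (formDeriv D a)^[k] P ⬝ᵥ φ = D^[k] (P ⬝ᵥ φ) := by
  induction k with
  | zero => rfl
  | succ k ih =>
    rw [Function.iterate_succ_apply', Function.iterate_succ_apply', hφ.formDeriv_dotProduct, ih]

theorem map_comp_formDeriv {ψ : A →+* B} (hψ : ∀ x, E (ψ x) = ψ (D x)) (P : ι → A) :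
    ψ ∘ formDeriv D a P = formDeriv E (a.map ψ) (ψ ∘ P) := by
  ext i
  simp only [Function.comp_apply, formDeriv_apply, map_add, hψ, RingHom.map_vecMul]

theorem map_comp_iterate_formDeriv {ψ : A →+* B} (hψ : ∀ x, E (ψ x) = ψ (D x)) (P : ι → A)
    (k : ℕ) : ψ ∘ (formDeriv D a)^[k] P = (formDeriv E (a.map ψ))^[k] (ψ ∘ P) := by
  induction k with
  | zero => rfl
  | succ k ih =>
    rw [Function.iterate_succ_apply', Function.iterate_succ_apply', ← ih, map_comp_formDeriv hψ]

theorem formDeriv_mem_of_mem_span {S : Set (ι → A)} {T : Submodule A (ι → A)} (hST : S ⊆ T)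
    (hS : ∀ w ∈ S, formDeriv D a w ∈ T) : ∀ w ∈ Submodule.span A S, formDeriv D a w ∈ T := by
  intro w hw
  induction hw using Submodule.span_induction with
  | mem x hx => exact hS x hx
  | zero => simp only [map_zero, T.zero_mem]
  | add x y _ _ ihx ihy =>
    rw [map_add]
    exact T.add_mem ihx ihy
  | smul c x hx ih =>
    rw [formDeriv_smul]
    exact T.add_mem (T.smul_mem _ ih) (T.smul_mem _ (Submodule.span_le.mpr hST hx))

end DifferentialForms

section Cyclic

variable {F ι : Type*} [Field F] [Fintype ι] {D : IntDerivation F} {a : Matrix ι ι F}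

theorem formDeriv_mem_span_range_iterate {P : ι → F} {s : ℕ}
    (hs : (formDeriv D a)^[s] P ∈
      Submodule.span F (Set.range fun j : Fin s => (formDeriv D a)^[j] P)) :
    ∀ w ∈ Submodule.span F (Set.range fun j : Fin s => (formDeriv D a)^[j] P),
      formDeriv D a w ∈ Submodule.span F (Set.range fun j : Fin s => (formDeriv D a)^[j] P) := by
  apply formDeriv_mem_of_mem_span Submodule.subset_span
  rintro _ ⟨j, rfl⟩
  rw [← Function.iterate_succ_apply' (formDeriv D a) j P]
  rcases (Nat.succ_le_of_lt j.is_lt).eq_or_lt with h | h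
  · rwa [h]
  · exact Submodule.subset_span ⟨⟨j + 1, h⟩, rfl⟩

theorem exists_iterate_formDeriv_mem_span (P : ι → F) :
    ∃ s ≤ Fintype.card ι, (formDeriv D a)^[s] P ∈
      Submodule.span F (Set.range fun j : Fin s => (formDeriv D a)^[j] P) := by
  by_contra! h
  have hind : ∀ s ≤ Fintype.card ι + 1,
      LinearIndependent F fun j : Fin s => (formDeriv D a)^[j] P := by
    intro s
    induction s with
    | zero => exact fun _ => linearIndependent_empty_type
    | succ s ih =>
      exact fun hs => linearIndependent_finSucc'.mpr
        ⟨ih (Nat.le_of_succ_le hs), h s (Nat.le_of_succ_le_succ hs)⟩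
  simpa using (hind _ le_rfl).fintype_card_le_finrank

theorem iterate_formDeriv_mem_span {m : ℕ} (hm : Fintype.card ι ≤ m) (P : ι → F) (k : ℕ) :
    (formDeriv D a)^[k] P ∈
      Submodule.span F (Set.range fun j : Fin m => (formDeriv D a)^[j] P) := by
  obtain ⟨s, hs, hmem⟩ := exists_iterate_formDeriv_mem_span (D := D) (a := a) P
  have hle : Submodule.span F (Set.range fun j : Fin s => (formDeriv D a)^[j] P) ≤
      Submodule.span F (Set.range fun j : Fin m => (formDeriv D a)^[j] P) := by
    apply Submodule.span_mono
    rintro _ ⟨j, rfl⟩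
    exact ⟨j.castLE (hs.trans hm), rfl⟩
  apply hle
  rcases lt_or_ge k s with hk | hk
  · exact Submodule.subset_span ⟨⟨k, hk⟩, rfl⟩
  · induction k, hk using Nat.le_induction with
    | base => exact hmem
    | succ n _ ih =>
      rw [Function.iterate_succ_apply']
      exact formDeriv_mem_span_range_iterate hmem _ ih

end Cyclic

section LogExtension

variable {F : Type*} [Field F] (D : IntDerivation F)

/-- The extension of a derivation `D` of `F` to `F[X]` with `X ↦ 1`, so that `X` plays the role
of a logarithm. -/
noncomputable def logDerivation : Derivation ℤ F[X] F[X] :=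
  letI : Differential F := ⟨D⟩
  Differential.implicitDeriv 1

theorem logDerivation_C (x : F) : logDerivation D (C x) = C (D x) :=
  letI : Differential F := ⟨D⟩
  Differential.implicitDeriv_C 1 x

theorem logDerivation_X : logDerivation D X = 1 :=
  letI : Differential F := ⟨D⟩
  Differential.implicitDeriv_X 1

theorem coeff_logDerivation (p : F[X]) (n : ℕ) :
    (logDerivation D p).coeff n = D (p.coeff n) + p.coeff (n + 1) * (n + 1) := by
  let : Differential F := ⟨D⟩
  simp [logDerivation, Differential.implicitDeriv, coeff_derivative]

variable {D}

theorem degree_logDerivation_lt {p : F[X]} (hp : p.Monic) :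
    (logDerivation D p).degree < p.degree := by
  rw [degree_eq_natDegree hp.ne_zero, degree_lt_iff_coeff_zero]
  intro n hn
  rw [coeff_logDerivation, coeff_eq_zero_of_natDegree_lt (Nat.lt_succ_of_le hn), zero_mul, add_zero]
  rcases hn.eq_or_lt with rfl | hlt
  · rw [hp.coeff_natDegree, Derivation.map_one_eq_zero]
  · rw [coeff_eq_zero_of_natDegree_lt hlt, map_zero]

theorem eq_one_of_logDerivation_eq_zero [CharZero F] (hD : ∀ u, D u ≠ 1) {p : F[X]}
    (hp : p.Monic) (h : logDerivation D p = 0) : p = 1 := by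
  rw [← hp.natDegree_eq_zero]
  by_contra hne
  obtain ⟨i, hi⟩ := Nat.exists_eq_succ_of_ne_zero hne
  have hcoeff : D (p.coeff i) = ((-(i + 1) : ℤ) : F) := by
    have := coeff_logDerivation D p i
    rw [h, coeff_zero, ← Nat.succ_eq_add_one, ← hi, hp.coeff_natDegree, one_mul] at this
    push_cast
    linear_combination -this
  have hcast : ((-(i + 1) : ℤ) : F) ≠ 0 := Int.cast_ne_zero.mpr (by lia)
  refine hD (((-(i + 1) : ℤ) : F)⁻¹ * p.coeff i) ?_
  rw [Derivation.leibniz, Derivation.leibniz_inv, Derivation.map_intCast, smul_zero, smul_zero,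
    add_zero, hcoeff, smul_eq_mul, inv_mul_cancel₀ hcast]

theorem one_mem_of_logDerivation_mem [CharZero F] (hD : ∀ u, D u ≠ 1) {W : Submodule F F[X]}
    (hW : W ≠ ⊥) (hDW : ∀ w ∈ W, logDerivation D w ∈ W) : (1 : F[X]) ∈ W := by
  classical
  obtain ⟨w₀, hw₀, hne⟩ := W.ne_bot_iff.mp hW
  have hmonic : ∀ w ∈ W, w ≠ 0 → ∃ v ∈ W, v.Monic ∧ v.degree = w.degree := fun w hw h =>
    ⟨w.leadingCoeff⁻¹ • w, W.smul_mem _ hw, by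
      rw [smul_eq_C_mul, mul_comm]
      exact ⟨monic_mul_leadingCoeff_inv h, degree_mul_leadingCoeff_inv w h⟩⟩
  obtain ⟨v₀, hv₀, hv₀m, -⟩ := hmonic w₀ hw₀ hne
  obtain ⟨v, ⟨hv, hvm⟩, hmin⟩ :=
    (degree_lt_wf (R := F)).has_min {v | v ∈ W ∧ v.Monic} ⟨v₀, hv₀, hv₀m⟩
  have hzero : logDerivation D v = 0 := by
    by_contra h
    obtain ⟨u, hu, hum, hdeg⟩ := hmonic _ (hDW v hv) h
    exact hmin u ⟨hu, hum⟩ (hdeg.trans_lt (degree_logDerivation_lt hvm))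
  exact eq_one_of_logDerivation_eq_zero hD hvm hzero ▸ hv

end LogExtension

/-! ### Symmetric powers of second-order equations -/

section SymmetricPower

/-- The system satisfied by the monomials `f ^ (d - j) * g ^ j` when `D f = g` and
`D g = -t * f`. -/
def symSystem {A : Type*} [CommRing A] (d : ℕ) (t : A) : Matrix (Fin (d + 1)) (Fin (d + 1)) A :=
  Matrix.of fun j i => (if (i : ℕ) = j + 1 then ((d - j : ℕ) : A) else 0) +
    (if (i : ℕ) + 1 = j then -t * (j : ℕ) else 0)

/-- The vector of monomials of degree `d` in `f` and `g`. -/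
def binaryMonomials {A : Type*} [CommRing A] (d : ℕ) (f g : A) (i : Fin (d + 1)) : A :=
  f ^ (d - i : ℕ) * g ^ (i : ℕ)

theorem symSystem_map {A B : Type*} [CommRing A] [CommRing B] (d : ℕ) (t : A) (ψ : A →+* B) :
    (symSystem d t).map ψ = symSystem d (ψ t) := by
  ext j i
  simp only [symSystem, Matrix.map_apply, Matrix.of_apply, map_add]
  split_ifs <;> simp

theorem isSolution_binaryMonomials {A : Type*} [CommRing A] {D : IntDerivation A} {t f g : A}
    (hf : D f = g) (hg : D g = -t * f) (d : ℕ) :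
    IsSolution D (symSystem d t) (binaryMonomials d f g) := by
  rintro ⟨j, hj⟩
  simp only [Matrix.mulVec, dotProduct, symSystem, Matrix.of_apply, add_mul, ite_mul, zero_mul,
    Finset.sum_add_distrib, binaryMonomials, Derivation.leibniz, Derivation.leibniz_pow, hf, hg,
    smul_eq_mul, nsmul_eq_mul]
  rw [add_comm, Fin.sum_univ_eq_sum_range
      fun i => if i = j + 1 then ((d - j : ℕ) : A) * (f ^ (d - i) * g ^ i) else 0,
    Fin.sum_univ_eq_sum_range
      fun i => if i + 1 = j then -t * (j : A) * (f ^ (d - i) * g ^ i) else 0,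
    Finset.sum_ite_eq']
  congr 1
  · split_ifs with h
    · rw [← Nat.sub_sub]
      ring
    · rw [Finset.mem_range, not_lt] at h
      rw [Nat.sub_eq_zero_of_le (by lia : d ≤ j)]
      simp
  · cases j with
    | zero => simp
    | succ j =>
      simp only [Nat.succ_inj]
      rw [Finset.sum_ite_eq', if_pos (by simp; lia), ← Nat.sub_add_cancel (by lia : 1 ≤ d - j),
        Nat.sub_sub, Nat.add_sub_cancel]
      ring

theorem binaryMonomials_succ_comp_castSucc {A : Type*} [CommRing A] {d : ℕ} (f g : A) :
    (binaryMonomials (d + 1) f g) ∘ Fin.castSucc = f • binaryMonomials d f g := by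
  ext i
  simp only [Function.comp_apply, binaryMonomials, Fin.val_castSucc, Pi.smul_apply, smul_eq_mul,
    Nat.succ_sub (Nat.le_of_lt_succ i.is_lt), pow_succ']
  ring

theorem dotProduct_binaryMonomials_succ {A : Type*} [CommRing A] {d : ℕ} (f g : A)
    (P : Fin (d + 2) → A) :
    P ⬝ᵥ binaryMonomials (d + 1) f g =
      f * ((P ∘ Fin.castSucc) ⬝ᵥ binaryMonomials d f g) + P (Fin.last _) * g ^ (d + 1) := by
  rw [dotProduct, Fin.sum_univ_castSucc, ← smul_eq_mul f, ← dotProduct_smul,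
    ← binaryMonomials_succ_comp_castSucc]
  simp [binaryMonomials, dotProduct]

theorem eq_zero_of_castSucc_eq_zero {A : Type*} [Zero A] {d : ℕ} {P : Fin (d + 1) → A}
    (h : P ∘ Fin.castSucc = 0) (hlast : P (Fin.last d) = 0) : P = 0 :=
  funext fun i => Fin.lastCases hlast (fun j => congrFun h j) i

theorem eq_zero_of_dotProduct_binaryMonomials_eq_zero {F : Type*} [CommRing F] [IsDomain F]
    {U V : F[X]} {x : F} (hU : U ≠ 0) (hUx : eval x U = 0) (hVx : eval x V ≠ 0) {d : ℕ}
    {p : Fin (d + 1) → F} (hp : (C ∘ p) ⬝ᵥ binaryMonomials d U V = 0) : p = 0 := by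
  induction d with
  | zero =>
    ext i
    simpa [binaryMonomials, dotProduct, Fin.fin_one_eq_zero i] using hp
  | succ d ih =>
    rw [dotProduct_binaryMonomials_succ] at hp
    have hlast : p (Fin.last _) = 0 := by
      have := congrArg (eval x) hp
      simpa [hUx, hVx] using this
    rw [Function.comp_apply, hlast, map_zero, zero_mul, add_zero] at hp
    exact eq_zero_of_castSucc_eq_zero (ih ((mul_eq_zero.mp hp).resolve_left hU)) hlast

/-- The coefficient vector, on monomials in `(x, y)`, of the `d`-th power of the linear form
`f * y - g * x` vanishing at `(f, g)`. -/
def crossPower {A : Type*} [CommRing A] (d : ℕ) (f g : A) (i : Fin (d + 1)) : A :=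
  d.choose i * ((-g) ^ (d - i : ℕ) * f ^ (i : ℕ))

theorem crossPower_dotProduct_binaryMonomials {A : Type*} [CommRing A] (d : ℕ) (f g x y : A) :
    crossPower d f g ⬝ᵥ binaryMonomials d x y = (f * y - g * x) ^ d := by
  rw [sub_eq_add_neg, ← neg_mul, add_pow, ← Fin.sum_univ_eq_sum_range
    (fun m => (f * y) ^ m * (-g * x) ^ (d - m) * (d.choose m : A))]
  refine Finset.sum_congr rfl fun i _ => ?_
  simp only [crossPower, binaryMonomials, mul_pow]
  ring

theorem map_comp_crossPower {A B : Type*} [CommRing A] [CommRing B] (ψ : A →+* B) (d : ℕ)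
    (f g : A) : ψ ∘ crossPower d f g = crossPower d (ψ f) (ψ g) := by
  ext i
  simp only [Function.comp_apply, crossPower, map_mul, map_natCast, map_pow, map_neg]

/-- `f` and `f * log + h`, where `D log = 1`, are independent solutions of `D² y = -t * y`. -/
structure IsLogPair {F : Type*} [Field F] (D : IntDerivation F) (t f h : F) : Prop where
  ne_zero : f ≠ 0
  deriv_deriv : D (D f) = -t * f
  deriv_deriv_log : D (D h + f) = -t * h - D f
  wronskian_ne_zero : f * (D h + f) - D f * h ≠ 0

namespace IsLogPair

variable {F : Type*} [Field F] {D : IntDerivation F} {t f h : F}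

theorem isSolution_binaryMonomials (hfh : IsLogPair D t f h) (d : ℕ) :
    IsSolution (logDerivation D) ((symSystem d t).map C)
      (binaryMonomials d (C f * X + C h) (C (D f) * X + C (D h + f))) := by
  have hU : logDerivation D (C f * X + C h) = C (D f) * X + C (D h + f) := by
    rw [map_add, Derivation.leibniz, logDerivation_C, logDerivation_C, logDerivation_X, map_add]
    simp only [smul_eq_mul]
    ring
  have hV : logDerivation D (C (D f) * X + C (D h + f)) = -C t * (C f * X + C h) := by
    rw [map_add, Derivation.leibniz, logDerivation_C, logDerivation_C, logDerivation_X,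
      hfh.deriv_deriv, hfh.deriv_deriv_log]
    simp only [smul_eq_mul, map_sub, map_mul, map_neg]
    ring
  rw [symSystem_map]
  exact _root_.isSolution_binaryMonomials hU hV d

theorem eq_zero_of_dotProduct_eq_zero (hfh : IsLogPair D t f h) {d : ℕ} {p : Fin (d + 1) → F}
    (hp : (C ∘ p) ⬝ᵥ binaryMonomials d (C f * X + C h) (C (D f) * X + C (D h + f)) = 0) :
    p = 0 := by
  have hf := hfh.ne_zero
  refine eq_zero_of_dotProduct_binaryMonomials_eq_zero (x := -h / f) ?_ ?_ ?_ hp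
  · intro h0
    simpa [hf] using congrArg (coeff · 1) h0
  · simp [mul_div_cancel₀ _ hf]
  · intro h0
    simp only [eval_add, eval_mul, eval_C, eval_X] at h0
    field_simp at h0
    exact hfh.wronskian_ne_zero (by linear_combination h0)

/-- A nonzero stable space of forms contains the form sent to a nonzero constant when `(f, D f)` is
specialised to the second solution, because a nonzero `D`-stable space of polynomials in `log`
contains `1`. -/
theorem crossPower_mem [CharZero F] (hfh : IsLogPair D t f h) (hD : ∀ u, D u ≠ 1) {d : ℕ}
    {W : Submodule F (Fin (d + 1) → F)} (hW : W ≠ ⊥)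
    (hDW : ∀ w ∈ W, formDeriv D (symSystem d t) w ∈ W) : crossPower d f (D f) ∈ W := by
  set U : F[X] := C f * X + C h with hU
  set V : F[X] := C (D f) * X + C (D h + f) with hV
  let ev : (Fin (d + 1) → F) →ₗ[F] F[X] :=
    Fintype.linearCombination F (binaryMonomials d U V)
  have hev : ∀ p, ev p = (C ∘ p) ⬝ᵥ binaryMonomials d U V := fun p => by
    simp only [ev, Fintype.linearCombination_apply, smul_eq_C_mul, dotProduct,
      Function.comp_apply]
  have hinj : Function.Injective ev := (injective_iff_map_eq_zero ev).mpr fun p hp =>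
    hfh.eq_zero_of_dotProduct_eq_zero (hev p ▸ hp)
  have hone : (1 : F[X]) ∈ W.map ev := by
    apply one_mem_of_logDerivation_mem hD
      (Submodule.map_bot ev ▸ (Submodule.map_injective_of_injective hinj).ne hW)
    rintro _ ⟨w, hw, rfl⟩
    refine ⟨_, hDW w hw, ?_⟩
    rw [hev, hev, map_comp_formDeriv (logDerivation_C D)]
    exact (hfh.isSolution_binaryMonomials d).formDeriv_dotProduct _
  obtain ⟨w, hw, hw1⟩ := hone
  have hcross : ev (crossPower d f (D f)) = C ((f * (D h + f) - D f * h) ^ d) := by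
    rw [hev, map_comp_crossPower, crossPower_dotProduct_binaryMonomials, hU, hV, map_pow]
    congr 1
    simp only [map_sub, map_mul, map_add]
    ring
  have heq : crossPower d f (D f) = (f * (D h + f) - D f * h) ^ d • w := by
    apply hinj
    rw [map_smul, hw1, hcross, smul_eq_C_mul, mul_one]
  exact heq ▸ W.smul_mem _ hw

end IsLogPair

end SymmetricPower

section Euler

/-- The Euler derivation `X d/dX` on polynomials. -/
noncomputable def polyEuler (R : Type*) [CommRing R] : IntDerivation R[X] :=
  .ofLeibniz ((X : R[X]) • derivative').toLinearMap.toAddMonoidHom (Derivation.leibniz _)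

theorem polyEuler_apply {R : Type*} [CommRing R] (p : R[X]) :
    polyEuler R p = X * derivative p := rfl

theorem coeff_polyEuler {R : Type*} [CommRing R] (p : R[X]) (n : ℕ) :
    (polyEuler R p).coeff n = n * p.coeff n := by
  rw [polyEuler_apply]
  cases n with
  | zero => simp
  | succ n =>
    rw [coeff_X_mul, coeff_derivative]
    push_cast
    ring

theorem natDegree_polyEuler_le {R : Type*} [CommRing R] (p : R[X]) :
    (polyEuler R p).natDegree ≤ p.natDegree := by
  rw [natDegree_le_iff_coeff_eq_zero]
  intro n hn
  rw [coeff_polyEuler, coeff_eq_zero_of_natDegree_lt hn, mul_zero]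

/-- The Euler derivation `X d/dX` on power series. -/
noncomputable def seriesEuler : IntDerivation (PowerSeries ℚ) :=
  .ofLeibniz ((AddMonoidHom.mulLeft PowerSeries.X).comp
    (PowerSeries.derivative ℚ).toLinearMap.toAddMonoidHom) fun p q => by
    simp only [AddMonoidHom.comp_apply, AddMonoidHom.coe_mulLeft, LinearMap.toAddMonoidHom_coe,
      Derivation.coeFn_coe, Derivation.leibniz, smul_eq_mul]
    ring

theorem coeff_seriesEuler (p : PowerSeries ℚ) (n : ℕ) :
    PowerSeries.coeff n (seriesEuler p) = n * PowerSeries.coeff n p := by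
  change PowerSeries.coeff n (PowerSeries.X * PowerSeries.derivative ℚ p) = _
  cases n with
  | zero => simp
  | succ n =>
    rw [PowerSeries.coeff_succ_X_mul, PowerSeries.coeff_derivative]
    push_cast
    ring

/-- The Euler derivation `X d/dX` on Laurent series. -/
noncomputable def laurentEuler : IntDerivation (LaurentSeries ℚ) :=
  .ofLeibniz
    { toFun x :=
        { coeff := fun n => (n : ℚ) * x.coeff n
          isPWO_support' := x.isPWO_support.mono fun n hn h => hn (by simp [h]) }
      map_zero' := by
        ext n
        simp
      map_add' x y := by
        ext n
        simp [mul_add] } fun x y => by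
    ext n
    simp only [HahnSeries.coeff_add, AddMonoidHom.coe_mk, ZeroHom.coe_mk]
    rw [HahnSeries.coeff_mul, mul_comm y,
      HahnSeries.coeff_mul_right' y.isPWO_support (fun n hn h => hn (by simp [h])),
      HahnSeries.coeff_mul_left' x.isPWO_support (fun n hn h => hn (by simp [h])),
      ← Finset.sum_add_distrib, Finset.mul_sum]
    refine Finset.sum_congr rfl fun ij hij => ?_
    rw [← (Finset.mem_antidiagonal.mp hij).2.2]
    push_cast
    ring

theorem coeff_laurentEuler (x : LaurentSeries ℚ) (n : ℤ) :
    (laurentEuler x).coeff n = n * x.coeff n := rfl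

theorem laurentEuler_ne_one (x : LaurentSeries ℚ) : laurentEuler x ≠ 1 := by
  intro h
  simpa [coeff_laurentEuler] using congrArg (fun y => y.coeff 0) h

theorem laurentEuler_ofPowerSeries (p : PowerSeries ℚ) :
    laurentEuler (HahnSeries.ofPowerSeries ℤ ℚ p) =
      HahnSeries.ofPowerSeries ℤ ℚ (seriesEuler p) := by
  ext n
  rw [coeff_laurentEuler]
  rcases lt_or_ge n 0 with h | h
  · have hneg (q : PowerSeries ℚ) : (HahnSeries.ofPowerSeries ℤ ℚ q).coeff n = 0 := by
      rw [HahnSeries.ofPowerSeries_apply]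
      apply HahnSeries.embDomain_of_notMem_range
      rintro ⟨m, rfl⟩
      exact h.not_ge (Int.natCast_nonneg m)
    rw [hneg, hneg, mul_zero]
  · lift n to ℕ using h
    rw [HahnSeries.ofPowerSeries_apply_coeff, HahnSeries.ofPowerSeries_apply_coeff,
      coeff_seriesEuler, Int.cast_natCast]

/-- Integer polynomials as rational power series. -/
noncomputable def polyToSeries : ℤ[X] →+* PowerSeries ℚ :=
  (coeToPowerSeries.ringHom).comp (mapRingHom (Int.castRingHom ℚ))

theorem coeff_polyToSeries (p : ℤ[X]) (n : ℕ) :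
    PowerSeries.coeff n (polyToSeries p) = p.coeff n := by
  simp [polyToSeries]

theorem polyToSeries_injective : Function.Injective polyToSeries := by
  intro p q h
  ext n
  have hn := congrArg (PowerSeries.coeff n) h
  rw [coeff_polyToSeries, coeff_polyToSeries] at hn
  exact_mod_cast hn

theorem polyToSeries_X : polyToSeries X = PowerSeries.X := by simp [polyToSeries]

theorem seriesEuler_polyToSeries (p : ℤ[X]) :
    seriesEuler (polyToSeries p) = polyToSeries (polyEuler ℤ p) := by
  ext n
  rw [coeff_seriesEuler, coeff_polyToSeries, coeff_polyToSeries, coeff_polyEuler]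
  push_cast
  ring

end Euler

section Transcendence

/-- The Riccati equation `u' = u ^ 2 + t`, for `u = A / B`, has no solution in the field of
fractions of `R`. -/
def NoRiccatiSolution {R : Type*} [CommRing R] (δ : IntDerivation R) (t : R) : Prop :=
  ∀ A B : R, B ≠ 0 → δ A * B - A * δ B ≠ A ^ 2 + t * B ^ 2

theorem noRiccatiSolution_polyEuler : NoRiccatiSolution (polyEuler ℤ) (4 * X ^ 2) := by
  intro A B hB h
  set M := max A.natDegree (B.natDegree + 1)
  have hA : A.natDegree ≤ M := le_max_left _ _
  have hBM : B.natDegree + 1 ≤ M := le_max_right _ _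
  have hXB : (X * B).natDegree ≤ M := by rwa [natDegree_X_mul hB]
  have hleft : (polyEuler ℤ A * B - A * polyEuler ℤ B).coeff (M + M) = 0 := by
    have hA' := natDegree_polyEuler_le A
    have hB' := natDegree_polyEuler_le B
    rw [coeff_sub, coeff_eq_zero_of_natDegree_lt, coeff_eq_zero_of_natDegree_lt, sub_zero]
    · exact natDegree_mul_le.trans_lt (by lia)
    · exact natDegree_mul_le.trans_lt (by lia)
  have hright : (A ^ 2 + 4 * X ^ 2 * B ^ 2).coeff (M + M) =
      A.coeff M ^ 2 + 4 * (X * B).coeff M ^ 2 := by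
    rw [show A ^ 2 + 4 * X ^ 2 * B ^ 2 = A * A + C 4 * ((X * B) * (X * B)) by
        rw [show (C 4 : ℤ[X]) = 4 from rfl]; ring,
      coeff_add, coeff_C_mul, coeff_mul_add_eq_of_natDegree_le hA hA,
      coeff_mul_add_eq_of_natDegree_le hXB hXB]
    ring
  rw [h, hright] at hleft
  have hAM : A.coeff M = 0 := by nlinarith [sq_nonneg (A.coeff M), sq_nonneg ((X * B).coeff M)]
  have hBM0 : (X * B).coeff M = 0 := by
    nlinarith [sq_nonneg (A.coeff M), sq_nonneg ((X * B).coeff M)]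
  rcases max_choice A.natDegree (B.natDegree + 1) with hmax | hmax
  · have hA0 : A = 0 := leadingCoeff_eq_zero.mp (hmax ▸ hAM : A.coeff A.natDegree = 0)
    simp [hA0] at hmax
  · rw [show M = B.natDegree + 1 from hmax, coeff_X_mul] at hBM0
    exact hB (leadingCoeff_eq_zero.mp hBM0)

variable {R F : Type*} [CommRing R] [Field F] [CharZero F] {δ : IntDerivation R}
  {D : IntDerivation F} {ψ : R →+* F} {t : R} {f h : F}

/-- By `IsLogPair.crossPower_mem` a stable line is spanned by `(f * y - D f * x) ^ (d + 1)`, whose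
last two coefficients make `D f / f` rational. -/
theorem NoRiccatiSolution.not_stable_span_singleton (ht : NoRiccatiSolution δ t)
    (hψ : Function.Injective ψ) (hψD : ∀ x, D (ψ x) = ψ (δ x)) (hD : ∀ u, D u ≠ 1)
    (hfh : IsLogPair D (ψ t) f h) {d : ℕ} {Q : Fin (d + 2) → R} (hQ : Q (Fin.last _) ≠ 0) :
    ¬ formDeriv D (symSystem (d + 1) (ψ t)) (ψ ∘ Q) ∈ Submodule.span F {ψ ∘ Q} := by
  intro hst
  have hψQ : ψ (Q (Fin.last _)) ≠ 0 := (map_ne_zero_iff ψ hψ).mpr hQ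
  obtain ⟨κ, hκ⟩ := Submodule.mem_span_singleton.mp <|
    hfh.crossPower_mem hD (W := Submodule.span F {ψ ∘ Q})
      (Submodule.span_singleton_eq_bot.not.mpr fun h0 => hψQ (congrFun h0 _))
      (formDeriv_mem_of_mem_span Submodule.subset_span (by rintro _ rfl; exact hst))
  have hlast := congrFun hκ (Fin.last _)
  have hprev := congrFun hκ (Fin.last d).castSucc
  simp only [crossPower, Pi.smul_apply, Function.comp_apply, smul_eq_mul, Fin.val_last,
    Fin.val_castSucc, Nat.choose_self, Nat.sub_self, pow_zero, one_mul, Nat.cast_one,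
    Nat.choose_succ_self_right, Nat.add_sub_cancel_left, pow_one] at hlast hprev
  have hκ0 : κ ≠ 0 := by
    rintro rfl
    exact pow_ne_zero (d + 1) hfh.ne_zero (by simpa using hlast.symm)
  set A := Q (Fin.last d).castSucc
  set B := ((d + 1 : ℕ) : R) * Q (Fin.last (d + 1)) with hB
  have hψB : ψ B = ((d + 1 : ℕ) : F) * ψ (Q (Fin.last (d + 1))) := by rw [hB, map_mul, map_natCast]
  have hB0 : B ≠ 0 := by
    rw [← map_ne_zero_iff ψ hψ, hψB]
    exact mul_ne_zero (Nat.cast_ne_zero.mpr d.succ_ne_zero) hψQ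
  have hAB : f * ψ A + D f * ψ B = 0 := by
    apply mul_left_cancel₀ hκ0
    rw [hψB]
    linear_combination f * hprev + D f * ((d + 1 : ℕ) : F) * hlast
  have hDAB := congrArg D hAB
  simp only [map_add, Derivation.leibniz, hψD, hfh.deriv_deriv, smul_eq_mul, map_zero] at hDAB
  apply ht A B hB0
  apply hψ
  apply mul_left_cancel₀ hfh.ne_zero
  simp only [map_sub, map_add, map_mul, map_pow]
  linear_combination ψ B * hDAB - (ψ A + ψ (δ B)) * hAB

/-- A relation of minimal degree `d` is proportional to its derivative, so it spans a stable
line. -/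
theorem NoRiccatiSolution.eq_zero_of_dotProduct_eq_zero (ht : NoRiccatiSolution δ t)
    (hψ : Function.Injective ψ) (hψD : ∀ x, D (ψ x) = ψ (δ x)) (hD : ∀ u, D u ≠ 1)
    (hfh : IsLogPair D (ψ t) f h) {d : ℕ} {Q : Fin (d + 1) → R}
    (hQ : (ψ ∘ Q) ⬝ᵥ binaryMonomials d f (D f) = 0) : Q = 0 := by
  induction d with
  | zero =>
    ext i
    apply hψ
    simpa [binaryMonomials, dotProduct, Fin.fin_one_eq_zero i] using hQ
  | succ d ih =>
    have hminimal {S : Fin (d + 2) → R} (hS : (ψ ∘ S) ⬝ᵥ binaryMonomials (d + 1) f (D f) = 0)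
        (hS0 : S (Fin.last _) = 0) : S = 0 := by
      rw [dotProduct_binaryMonomials_succ, Function.comp_apply, hS0, map_zero, zero_mul,
        add_zero] at hS
      exact eq_zero_of_castSucc_eq_zero (ih ((mul_eq_zero.mp hS).resolve_left hfh.ne_zero)) hS0
    by_contra hne
    have hlast : Q (Fin.last _) ≠ 0 := fun h0 => hne (hminimal hQ h0)
    have hψlast : ψ (Q (Fin.last _)) ≠ 0 := (map_ne_zero_iff ψ hψ).mpr hlast
    set Q' := formDeriv δ (symSystem (d + 1) t) Q with hQ'
    have hψQ' : ψ ∘ Q' = formDeriv D (symSystem (d + 1) (ψ t)) (ψ ∘ Q) := by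
      rw [hQ', map_comp_formDeriv hψD, symSystem_map]
    have hQ'0 : (ψ ∘ Q') ⬝ᵥ binaryMonomials (d + 1) f (D f) = 0 := by
      rw [hψQ', (isSolution_binaryMonomials rfl hfh.deriv_deriv _).formDeriv_dotProduct, hQ,
        map_zero]
    have hprop : Q (Fin.last _) • Q' - Q' (Fin.last _) • Q = 0 := by
      refine hminimal ?_ (by simp only [Pi.sub_apply, Pi.smul_apply, smul_eq_mul]; ring)
      have hcomp : ψ ∘ (Q (Fin.last _) • Q' - Q' (Fin.last _) • Q) =
          ψ (Q (Fin.last _)) • (ψ ∘ Q') - ψ (Q' (Fin.last _)) • (ψ ∘ Q) := by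
        ext i
        simp
      rw [hcomp, sub_dotProduct, smul_dotProduct, smul_dotProduct, hQ'0, hQ, smul_zero, smul_zero,
        sub_zero]
    refine ht.not_stable_span_singleton hψ hψD hD hfh hlast (hψQ' ▸ ?_)
    refine Submodule.mem_span_singleton.mpr ⟨ψ (Q' (Fin.last _)) / ψ (Q (Fin.last _)), ?_⟩
    ext i
    have hi := congrArg ψ (sub_eq_zero.mp (congrFun hprop i))
    simp only [Pi.smul_apply, smul_eq_mul, map_mul] at hi
    simp only [Pi.smul_apply, smul_eq_mul, Function.comp_apply]
    rw [div_mul_eq_mul_div, ← hi, mul_div_cancel_left₀ _ hψlast]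

theorem crossPower_dotProduct {A : Type*} [CommRing A] (d : ℕ) (f g : A) (q : Fin (d + 1) → A) :
    crossPower d f g ⬝ᵥ q =
      (fun i : Fin (d + 1) => d.choose i * (-1) ^ (i : ℕ) * q i.rev) ⬝ᵥ binaryMonomials d f g := by
  rw [dotProduct, dotProduct, ← Equiv.sum_comp Fin.revPerm]
  refine Finset.sum_congr rfl fun i _ => ?_
  have hrev : (i.rev : ℕ) = d - i := by
    rw [Fin.val_rev]
    lia
  simp only [Fin.revPerm_apply, crossPower, binaryMonomials, hrev,
    Nat.choose_symm (Nat.le_of_lt_succ i.is_lt), Nat.sub_sub_self (Nat.le_of_lt_succ i.is_lt)]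
  rw [neg_pow]
  ring

theorem dotProduct_eq_zero_of_mem_span {A ι : Type*} [CommRing A] [Fintype ι] {S : Set (ι → A)}
    {v w : ι → A} (hS : ∀ x ∈ S, x ⬝ᵥ v = 0) (hw : w ∈ Submodule.span A S) : w ⬝ᵥ v = 0 := by
  induction hw using Submodule.span_induction with
  | mem x hx => exact hS x hx
  | zero => exact zero_dotProduct v
  | add x y _ _ hx hy => rw [add_dotProduct, hx, hy, add_zero]
  | smul c x _ hx => rw [smul_dotProduct, hx, smul_zero]

theorem NoRiccatiSolution.det_formMatrix_ne_zero (ht : NoRiccatiSolution δ t)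
    (hψ : Function.Injective ψ) (hψD : ∀ x, D (ψ x) = ψ (δ x)) (hD : ∀ u, D u ≠ 1)
    (hfh : IsLogPair D (ψ t) f h) {d : ℕ} {P : Fin (d + 1) → R} (hP : P ≠ 0) :
    (formMatrix δ (symSystem d t) P).det ≠ 0 := by
  have := hψ.isDomain ψ
  intro hdet
  obtain ⟨q, hq0, hq⟩ := Matrix.exists_mulVec_eq_zero_iff.mpr hdet
  have hspan := iterate_formDeriv_mem_span (D := D) (a := symSystem d (ψ t))
    (Fintype.card_fin (d + 1)).le (ψ ∘ P)
  have hmem : crossPower d f (D f) ∈ Submodule.span F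
      (Set.range fun j : Fin (d + 1) => (formDeriv D (symSystem d (ψ t)))^[j] (ψ ∘ P)) := by
    refine hfh.crossPower_mem hD ((Submodule.ne_bot_iff _).mpr ⟨ψ ∘ P, hspan 0, fun h0 => hP ?_⟩)
      (formDeriv_mem_of_mem_span Submodule.subset_span ?_)
    · ext1 i
      exact hψ (by simpa using congrFun h0 i)
    · rintro _ ⟨k, rfl⟩
      simpa only [← Function.iterate_succ_apply'] using hspan (k + 1)
  have hrel : crossPower d f (D f) ⬝ᵥ (ψ ∘ q) = 0 := by
    refine dotProduct_eq_zero_of_mem_span ?_ hmem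
    rintro _ ⟨k, rfl⟩
    have hk := congrArg ψ (congrFun hq k)
    rw [Matrix.mulVec, RingHom.map_dotProduct, Pi.zero_apply, map_zero] at hk
    simp only [← symSystem_map, ← map_comp_iterate_formDeriv hψD]
    exact hk
  rw [crossPower_dotProduct] at hrel
  have hzero := ht.eq_zero_of_dotProduct_eq_zero hψ hψD hD hfh
    (Q := fun i => d.choose i * (-1) ^ (i : ℕ) * q i.rev) (by
      rw [← hrel]
      congr 1
      ext i
      simp)
  apply hq0
  ext i
  have hi := congrArg ψ (congrFun hzero i.rev)
  have hchoose : d.choose i.rev ≠ 0 := (Nat.choose_pos (Nat.le_of_lt_succ i.rev.is_lt)).ne'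
  simp only [map_mul, map_natCast, map_pow, map_neg, map_one, Fin.rev_rev, Pi.zero_apply, map_zero,
    mul_eq_zero, Nat.cast_eq_zero, hchoose, pow_eq_zero_iff', neg_eq_zero, one_ne_zero, false_and,
    or_self, false_or] at hi
  exact hψ (hi.trans (map_zero ψ).symm)

end Transcendence

/-! ### Power series of exponential type -/

section ExponentialType

/-- Power series `∑ c n / n! * X ^ n` with integers `c n` of at most geometric growth. These are
`E`-functions in the sense of Siegel, with trivial denominators. -/
def IsExpType (φ : PowerSeries ℚ) : Prop :=
  ∃ (C : ℕ) (c : ℕ → ℤ), ∀ n, PowerSeries.coeff n φ * n.factorial = c n ∧ |c n| ≤ (C : ℤ) ^ n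

theorem IsExpType.one : IsExpType 1 := by
  refine ⟨0, fun n => if n = 0 then 1 else 0, fun n => ?_⟩
  rcases eq_or_ne n 0 with rfl | hn
  · simp
  · simp [PowerSeries.coeff_one, hn]

theorem IsExpType.mul {φ χ : PowerSeries ℚ} (hφ : IsExpType φ) (hχ : IsExpType χ) :
    IsExpType (φ * χ) := by
  obtain ⟨A, a, ha⟩ := hφ
  obtain ⟨B, b, hb⟩ := hχ
  refine ⟨A + B, fun n => ∑ i ∈ Finset.range n.succ, n.choose i * (a i * b (n - i)),
    fun n => ⟨?_, ?_⟩⟩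
  · rw [PowerSeries.coeff_mul, Finset.Nat.sum_antidiagonal_eq_sum_range_succ
      (fun i j => PowerSeries.coeff i φ * PowerSeries.coeff j χ), Finset.sum_mul]
    push_cast
    refine Finset.sum_congr rfl fun i hi => ?_
    rw [← (ha i).1, ← (hb _).1,
      ← Nat.choose_mul_factorial_mul_factorial (Finset.mem_range_succ_iff.mp hi)]
    push_cast
    ring
  · push_cast
    rw [add_pow]
    refine (Finset.abs_sum_le_sum_abs _ _).trans (Finset.sum_le_sum fun i _ => ?_)
    rw [abs_mul, abs_mul, Nat.abs_cast, mul_comm]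
    gcongr
    · exact (ha i).2
    · exact (hb _).2

theorem IsExpType.pow {φ : PowerSeries ℚ} (hφ : IsExpType φ) (k : ℕ) : IsExpType (φ ^ k) := by
  induction k with
  | zero => rw [pow_zero]; exact .one
  | succ k ih => rw [pow_succ]; exact ih.mul hφ

theorem IsExpType.seriesEuler {φ : PowerSeries ℚ} (hφ : IsExpType φ) :
    IsExpType (seriesEuler φ) := by
  obtain ⟨C, c, hc⟩ := hφ
  refine ⟨2 * C, fun n => n * c n, fun n => ⟨?_, ?_⟩⟩
  · rw [coeff_seriesEuler, mul_assoc, (hc n).1]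
    push_cast
    rfl
  · rw [abs_mul, Nat.abs_cast]
    push_cast
    rw [mul_pow]
    gcongr
    · exact_mod_cast Nat.lt_two_pow_self.le
    · exact (hc n).2

theorem IsExpType.exists_abs_coeff_mul_factorial_le {φ : PowerSeries ℚ} (hφ : IsExpType φ) :
    ∃ C : ℕ, ∀ n, |PowerSeries.coeff n φ| * n.factorial ≤ C ^ n := by
  obtain ⟨C, c, hc⟩ := hφ
  refine ⟨C, fun n => ?_⟩
  rw [← Nat.abs_cast n.factorial, ← abs_mul, (hc n).1]
  exact_mod_cast (hc n).2

end ExponentialType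

section Evaluation

/-- The sum of a rational power series at a complex point. It has the junk value `0` where the
series diverges. -/
noncomputable def seriesEval (z : ℂ) (φ : PowerSeries ℚ) : ℂ :=
  ∑' n, ((PowerSeries.coeff n φ : ℚ) : ℂ) * z ^ n

variable {φ χ : PowerSeries ℚ} {z : ℂ}

theorem norm_coeff_mul_pow_le {B : ℝ} {C l : ℕ}
    (h : |PowerSeries.coeff l φ| * l.factorial ≤ B * (C : ℝ) ^ l) :
    ‖((PowerSeries.coeff l φ : ℚ) : ℂ) * z ^ l‖ ≤ B * ((C * ‖z‖) ^ l / l.factorial) := by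
  rw [norm_mul, norm_pow, Complex.norm_ratCast, mul_pow, mul_div_right_comm, ← mul_assoc,
    ← mul_div_assoc]
  gcongr
  rwa [le_div_iff₀ (by positivity), ← Rat.cast_abs]

theorem IsExpType.summable (hφ : IsExpType φ) (z : ℂ) :
    Summable fun n => ‖((PowerSeries.coeff n φ : ℚ) : ℂ) * z ^ n‖ := by
  obtain ⟨C, hC⟩ := hφ.exists_abs_coeff_mul_factorial_le
  refine (Real.summable_pow_div_factorial (C * ‖z‖)).of_nonneg_of_le (fun _ => norm_nonneg _)
    fun n => ?_
  rw [← one_mul (_ / _)]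
  refine norm_coeff_mul_pow_le ?_
  rw [one_mul]
  exact_mod_cast hC n

theorem summable_polyToSeries (p : ℤ[X]) (z : ℂ) :
    Summable fun n => ‖((PowerSeries.coeff n (polyToSeries p) : ℚ) : ℂ) * z ^ n‖ := by
  refine summable_of_ne_finset_zero (s := Finset.range (p.natDegree + 1)) fun n hn => ?_
  rw [coeff_polyToSeries, coeff_eq_zero_of_natDegree_lt (by simpa using hn)]
  simp

theorem seriesEval_polyToSeries (p : ℤ[X]) (z : ℂ) :
    seriesEval z (polyToSeries p) = aeval z p := by
  rw [seriesEval, tsum_eq_sum (s := Finset.range (p.natDegree + 1)), aeval_eq_sum_range]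
  · refine Finset.sum_congr rfl fun n _ => ?_
    rw [coeff_polyToSeries, zsmul_eq_mul, Rat.cast_intCast]
  · intro n hn
    rw [coeff_polyToSeries, coeff_eq_zero_of_natDegree_lt (by simpa using hn)]
    simp

theorem coeff_mul_mul_pow (φ χ : PowerSeries ℚ) (z : ℂ) (n : ℕ) :
    ((PowerSeries.coeff n (φ * χ) : ℚ) : ℂ) * z ^ n =
      ∑ kl ∈ Finset.HasAntidiagonal.antidiagonal n,
        ((PowerSeries.coeff kl.1 φ : ℚ) : ℂ) * z ^ kl.1 *
          (((PowerSeries.coeff kl.2 χ : ℚ) : ℂ) * z ^ kl.2) := by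
  rw [PowerSeries.coeff_mul]
  push_cast
  rw [Finset.sum_mul]
  refine Finset.sum_congr rfl fun kl hkl => ?_
  rw [← Finset.HasAntidiagonal.mem_antidiagonal.mp hkl, pow_add]
  ring

theorem seriesEval_mul
    (hφ : Summable fun n => ‖((PowerSeries.coeff n φ : ℚ) : ℂ) * z ^ n‖)
    (hχ : Summable fun n => ‖((PowerSeries.coeff n χ : ℚ) : ℂ) * z ^ n‖) :
    seriesEval z (φ * χ) = seriesEval z φ * seriesEval z χ := by
  simp only [seriesEval, coeff_mul_mul_pow]
  exact (tsum_mul_tsum_eq_tsum_sum_antidiagonal_of_summable_norm hφ hχ).symm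

theorem seriesEval_one (z : ℂ) : seriesEval z 1 = 1 := by
  rw [← map_one polyToSeries, seriesEval_polyToSeries, map_one]

theorem seriesEval_pow (hφ : IsExpType φ) (z : ℂ) (k : ℕ) :
    seriesEval z (φ ^ k) = seriesEval z φ ^ k := by
  induction k with
  | zero => rw [pow_zero, pow_zero, seriesEval_one]
  | succ k ih =>
    rw [pow_succ, pow_succ, seriesEval_mul ((hφ.pow k).summable z) (hφ.summable z), ih]

theorem norm_seriesEval_mul_factorial_le {B : ℝ} {C M : ℕ} (hM : PowerSeries.X ^ M ∣ φ)
    (h : ∀ l, |PowerSeries.coeff l φ| * l.factorial ≤ B * (C : ℝ) ^ l) (z : ℂ) :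
    ‖seriesEval z φ‖ * M.factorial ≤ B * (C * ‖z‖) ^ M * Real.exp (C * ‖z‖) := by
  have hB : 0 ≤ B := (by positivity : (0 : ℝ) ≤ _).trans ((h 0).trans_eq (by simp))
  set Y : ℝ := C * ‖z‖
  set f : ℕ → ℂ := fun l => ((PowerSeries.coeff l φ : ℚ) : ℂ) * z ^ l with hf
  have hfM (j : ℕ) : ‖f (j + M)‖ ≤ B * Y ^ M / M.factorial * (Y ^ j / j.factorial) := by
    have hfac : (j.factorial * M.factorial : ℝ) ≤ (j + M).factorial := by
      exact_mod_cast Nat.le_of_dvd (Nat.factorial_pos _)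
        (Nat.factorial_mul_factorial_dvd_factorial_add j M)
    calc ‖f (j + M)‖ ≤ B * (Y ^ (j + M) / (j + M).factorial) := norm_coeff_mul_pow_le (h _)
      _ ≤ B * (Y ^ (j + M) / (j.factorial * M.factorial)) := by gcongr
      _ = B * Y ^ M / M.factorial * (Y ^ j / j.factorial) := by
        rw [pow_add]
        field_simp
  have hexp := (NormedSpace.expSeries_div_hasSum_exp Y).mul_left (B * Y ^ M / M.factorial)
  have hsum : Summable f := (summable_nat_add_iff M).mp (.of_norm_bounded hexp.summable hfM)
  have htail : seriesEval z φ = ∑' j, f (j + M) := by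
    rw [seriesEval, ← hsum.sum_add_tsum_nat_add M, Finset.sum_eq_zero, zero_add]
    intro l hl
    simp only [hf, PowerSeries.X_pow_dvd_iff.mp hM l (Finset.mem_range.mp hl), Rat.cast_zero,
      zero_mul]
  rw [htail, ← le_div_iff₀ (by positivity), mul_div_right_comm, Real.exp_eq_exp_ℝ]
  exact tsum_of_norm_bounded hexp hfM

theorem coeff_iterate_seriesEuler (φ : PowerSeries ℚ) (k n : ℕ) :
    PowerSeries.coeff n (seriesEuler^[k] φ) = (n : ℚ) ^ k * PowerSeries.coeff n φ := by
  induction k with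
  | zero => simp
  | succ k ih =>
    rw [Function.iterate_succ_apply', coeff_seriesEuler, ih]
    ring

theorem X_pow_dvd_iterate_seriesEuler {M : ℕ} (hM : PowerSeries.X ^ M ∣ φ) (k : ℕ) :
    PowerSeries.X ^ M ∣ seriesEuler^[k] φ := by
  rw [PowerSeries.X_pow_dvd_iff] at hM ⊢
  intro l hl
  rw [coeff_iterate_seriesEuler, hM l hl, mul_zero]

theorem abs_coeff_iterate_seriesEuler_le {B : ℝ} {C : ℕ}
    (h : ∀ l, |PowerSeries.coeff l φ| * l.factorial ≤ B * (C : ℝ) ^ l) (k l : ℕ) :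
    |PowerSeries.coeff l (seriesEuler^[k] φ)| * l.factorial ≤
      k.factorial * B * ((3 * C : ℕ) : ℝ) ^ l := by
  have hpow : (l : ℝ) ^ k ≤ k.factorial * 3 ^ l := by
    have hexp := Real.pow_div_factorial_le_exp (l : ℝ) l.cast_nonneg k
    rw [div_le_iff₀ (by positivity), ← mul_one (l : ℝ), Real.exp_nat_mul, mul_one,
      mul_comm] at hexp
    refine hexp.trans ?_
    gcongr
    exact Real.exp_one_lt_three.le
  rw [coeff_iterate_seriesEuler, abs_mul, abs_pow, Nat.abs_cast]
  push_cast
  rw [mul_assoc]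
  calc (l : ℝ) ^ k * (|((PowerSeries.coeff l φ : ℚ) : ℝ)| * l.factorial)
      ≤ (k.factorial * 3 ^ l) * (B * (C : ℝ) ^ l) :=
        mul_le_mul hpow (by exact_mod_cast h l) (by positivity) (by positivity)
    _ = k.factorial * B * (3 * C) ^ l := by rw [mul_pow]; ring

end Evaluation

section LinearForm

variable {ι : Type*} [Fintype ι]

/-- The value at `β` of the linear form with coefficients `P`, to which `ψ` is applied first. -/
def evalForm {A K : Type*} [CommRing A] [CommRing K] (ψ : A →+* K) (β : ι → K) :
    (ι → A) →ₛₗ[ψ] K where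
  toFun P := (ψ ∘ P) ⬝ᵥ β
  map_add' P Q := by
    simp only [dotProduct, Function.comp_apply, Pi.add_apply, map_add, add_mul,
      Finset.sum_add_distrib]
  map_smul' c P := by
    simp only [dotProduct, Function.comp_apply, Pi.smul_apply, smul_eq_mul, map_mul, mul_assoc,
      Finset.mul_sum]

theorem evalForm_apply {A K : Type*} [CommRing A] [CommRing K] (ψ : A →+* K) (β : ι → K)
    (P : ι → A) : evalForm ψ β P = ∑ i, ψ (P i) * β i := rfl

theorem evalForm_single {A K : Type*} [CommRing A] [CommRing K] [DecidableEq ι] (ψ : A →+* K)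
    (β : ι → K) (j : ι) : evalForm ψ β (Pi.single j 1) = β j := by
  rw [evalForm_apply, Finset.sum_eq_single j fun i _ hi => by
    rw [Pi.single_eq_of_ne hi, map_zero, zero_mul], Pi.single_eq_same, map_one, one_mul]
  exact fun h => absurd (Finset.mem_univ j) h

/-- The linear form `∑ i, P i * φ i` in the series `φ i` with polynomial coefficients `P i`. -/
noncomputable def linearForm (φ : ι → PowerSeries ℚ) (P : ι → ℤ[X]) : PowerSeries ℚ :=
  evalForm polyToSeries φ P

theorem linearForm_iterate_formDeriv {a : Matrix ι ι ℤ[X]} {φ : ι → PowerSeries ℚ}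
    (hφ : IsSolution seriesEuler (a.map polyToSeries) φ) (P : ι → ℤ[X]) (k : ℕ) :
    linearForm φ ((formDeriv (polyEuler ℤ) a)^[k] P) = seriesEuler^[k] (linearForm φ P) := by
  change (polyToSeries ∘ _) ⬝ᵥ φ = _
  rw [map_comp_iterate_formDeriv seriesEuler_polyToSeries, hφ.iterate_formDeriv_dotProduct]
  rfl

theorem seriesEval_linearForm {φ : ι → PowerSeries ℚ} (hφ : ∀ i, IsExpType (φ i))
    (P : ι → ℤ[X]) (z : ℂ) :
    seriesEval z (linearForm φ P) = ∑ i, aeval z (P i) * seriesEval z (φ i) := by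
  have hprod (i : ι) : Summable fun n =>
      ((PowerSeries.coeff n (polyToSeries (P i) * φ i) : ℚ) : ℂ) * z ^ n := by
    simp only [coeff_mul_mul_pow]
    exact (summable_norm_sum_mul_antidiagonal_of_summable_norm (summable_polyToSeries (P i) z)
      ((hφ i).summable z)).of_norm
  calc seriesEval z (linearForm φ P) = ∑ i, seriesEval z (polyToSeries (P i) * φ i) := by
        simp only [seriesEval, linearForm, evalForm_apply, map_sum, Rat.cast_sum, Finset.sum_mul]
        exact Summable.tsum_finsetSum fun i _ => hprod i
    _ = ∑ i, aeval z (P i) * seriesEval z (φ i) := by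
        refine Finset.sum_congr rfl fun i _ => ?_
        rw [seriesEval_mul (summable_polyToSeries _ z) ((hφ i).summable z),
          seriesEval_polyToSeries]

end LinearForm

/-! ### Siegel's lemma and auxiliary forms -/

section FactorialPoly

variable {N : ℕ} (p : Fin N → ℤ)

/-- The integral polynomial `N! * ∑ k, p k / k! * X ^ k`. -/
noncomputable def factorialPoly : ℤ[X] :=
  ∑ k : Fin N, monomial (k : ℕ) (p k * (N.factorial / (k : ℕ).factorial : ℕ))

theorem coeff_factorialPoly (k : Fin N) :
    (factorialPoly p).coeff k = p k * (N.factorial / (k : ℕ).factorial : ℕ) := by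
  simp only [factorialPoly, finsetSum_coeff, coeff_monomial, Fin.val_inj, Finset.sum_ite_eq',
    Finset.mem_univ, if_true]

theorem coeff_factorialPoly_of_le {k : ℕ} (hk : N ≤ k) : (factorialPoly p).coeff k = 0 := by
  rw [factorialPoly, finsetSum_coeff]
  exact Finset.sum_eq_zero fun i _ => coeff_monomial_of_ne _ (i.2.trans_le hk).ne'

theorem natDegree_factorialPoly_lt (hN : 0 < N) : (factorialPoly p).natDegree < N := by
  rw [Nat.lt_iff_le_pred hN, natDegree_le_iff_coeff_eq_zero]
  exact fun k hk => coeff_factorialPoly_of_le p (Nat.le_of_pred_lt hk)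

theorem factorialPoly_ne_zero (hp : p ≠ 0) : factorialPoly p ≠ 0 := by
  obtain ⟨k, hk⟩ := Function.ne_iff.mp hp
  refine ne_of_apply_ne (fun q => q.coeff k) ?_
  rw [coeff_factorialPoly, coeff_zero]
  refine mul_ne_zero hk (Nat.cast_ne_zero.mpr ?_)
  exact (Nat.div_pos (Nat.factorial_le k.2.le) (Nat.factorial_pos _)).ne'

theorem abs_coeff_factorialPoly_le {B : ℤ} (hB : 0 ≤ B) (hp : ∀ k, |p k| ≤ B) (k : ℕ) :
    |(factorialPoly p).coeff k| ≤ N.factorial * B := by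
  rcases lt_or_ge k N with hk | hk
  · rw [coeff_factorialPoly p ⟨k, hk⟩, abs_mul, Nat.abs_cast, mul_comm]
    gcongr
    · exact Nat.div_le_self _ _
    · exact hp _
  · rw [coeff_factorialPoly_of_le p hk, abs_zero]
    positivity

theorem coeff_factorialPoly_mul_mul_factorial {φ : PowerSeries ℚ} {c : ℕ → ℤ}
    (hc : ∀ n, PowerSeries.coeff n φ * n.factorial = c n) (l : ℕ) :
    PowerSeries.coeff l (polyToSeries (factorialPoly p) * φ) * l.factorial =
      N.factorial * ∑ k : Fin N, (l.choose k * c (l - k) * p k : ℚ) := by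
  rw [factorialPoly, map_sum, Finset.sum_mul, map_sum, Finset.sum_mul, Finset.mul_sum]
  refine Finset.sum_congr rfl fun k _ => ?_
  rw [← C_mul_X_pow_eq_monomial, map_mul polyToSeries, map_pow polyToSeries, polyToSeries_X,
    eq_intCast C, map_intCast polyToSeries,
    mul_assoc, ← map_intCast (PowerSeries.C (R := ℚ)), PowerSeries.coeff_C_mul,
    PowerSeries.coeff_X_pow_mul', Int.cast_mul, Int.cast_natCast,
    Nat.cast_div (Nat.factorial_dvd_factorial k.2.le) (by positivity)]
  split_ifs with h
  · rw [← hc, ← Nat.choose_mul_factorial_mul_factorial h]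
    push_cast
    field_simp
  · rw [Nat.choose_eq_zero_of_lt (not_le.mp h)]
    simp

end FactorialPoly

section Siegel

attribute [local instance] Matrix.seminormedAddCommGroup

theorem exists_int_vec_abs_le {ι : Type*} [Fintype ι] {k n B : ℕ} (hk : 0 < k) (hn : 0 < n)
    (hι : Fintype.card ι = (k + 1) * n) (hB : 1 ≤ B) {A : Matrix (Fin (k * n)) ι ℤ}
    (hA : ∀ l i, |A l i| ≤ B) :
    ∃ p : ι → ℤ, p ≠ 0 ∧ A *ᵥ p = 0 ∧ ∀ i, |p i| ≤ ((((k + 1) * n * B) ^ k : ℕ) : ℤ) := by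
  obtain ⟨p, hp, hAp, hnorm⟩ := Int.Matrix.exists_ne_zero_int_vec_norm_le A
    (by rw [hι, Fintype.card_fin]; gcongr; exact k.lt_succ_self)
    (by rw [Fintype.card_fin]; positivity)
  refine ⟨p, hp, hAp, fun i => ?_⟩
  have hexp : (Fintype.card (Fin (k * n)) : ℝ) /
      ((Fintype.card ι : ℝ) - Fintype.card (Fin (k * n))) = (k : ℕ) := by
    rw [hι, Fintype.card_fin]
    push_cast
    field_simp
    ring
  have hmax : max 1 ‖A‖ ≤ (B : ℝ) := by
    refine max_le (by exact_mod_cast hB) ((Matrix.norm_le_iff B.cast_nonneg).mpr fun l i => ?_)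
    rw [Int.norm_eq_abs]
    exact_mod_cast hA l i
  rw [hexp, Real.rpow_natCast, hι] at hnorm
  have hle := calc |(p i : ℝ)| ≤ ‖p‖ := Int.norm_eq_abs (p i) ▸ norm_le_pi_norm p i
    _ ≤ (((k + 1) * n : ℕ) * B) ^ k := hnorm.trans (by gcongr)
  exact_mod_cast hle

end Siegel

section AuxiliaryForm

variable {m : ℕ} {φ : Fin m → PowerSeries ℚ} {c : Fin m → ℕ → ℤ} {A : ℕ}

/-- The matrix sending the coefficients `p` of `∑ i, (∑ k, p (i, k) / k! * X ^ k) * φ i` to the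
Taylor coefficients of that form, multiplied by factorials, for `φ i = ∑ l, c i l / l! * X ^ l`. -/
def taylorMatrix (c : Fin m → ℕ → ℤ) (N : ℕ) : Matrix ℕ (Fin m × Fin N) ℤ :=
  Matrix.of fun l ik => l.choose ik.2 * c ik.1 (l - ik.2)

theorem coeff_linearForm_factorialPoly_mul_factorial
    (hc : ∀ i n, PowerSeries.coeff n (φ i) * n.factorial = c i n) {N : ℕ}
    (p : Fin m × Fin N → ℤ) (l : ℕ) :
    PowerSeries.coeff l (linearForm φ fun i => factorialPoly fun k => p (i, k)) * l.factorial =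
      N.factorial * ((taylorMatrix c N *ᵥ p) l : ℤ) := by
  simp only [linearForm, evalForm_apply, dotProduct, map_sum, Finset.sum_mul,
    coeff_factorialPoly_mul_mul_factorial _ (hc _), Matrix.mulVec, taylorMatrix, Matrix.of_apply,
    Fintype.sum_prod_type, Int.cast_sum, Int.cast_mul, Int.cast_natCast, Finset.mul_sum]

theorem abs_taylorMatrix_le (hA : 1 ≤ A) (hc : ∀ i n, |c i n| ≤ (A : ℤ) ^ n) (N l : ℕ)
    (ik : Fin m × Fin N) : |taylorMatrix c N l ik| ≤ (2 * A : ℤ) ^ l := by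
  rw [taylorMatrix, Matrix.of_apply, abs_mul, Nat.abs_cast, mul_pow]
  gcongr
  · exact_mod_cast Nat.choose_le_two_pow _ _
  · exact (hc _ _).trans (pow_le_pow_right₀ (by exact_mod_cast hA) (Nat.sub_le _ _))

theorem abs_taylorMatrix_mulVec_le (hA : 1 ≤ A) (hc : ∀ i n, |c i n| ≤ (A : ℤ) ^ n) {N : ℕ}
    {p : Fin m × Fin N → ℤ} {B : ℤ} (hp : ∀ ik, |p ik| ≤ B) (l : ℕ) :
    |(taylorMatrix c N *ᵥ p) l| ≤ m * N * B * (2 * A) ^ l :=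
  calc |(taylorMatrix c N *ᵥ p) l| ≤ ∑ ik, |taylorMatrix c N l ik * p ik| :=
        Finset.abs_sum_le_sum_abs _ _
    _ ≤ ∑ _ik : Fin m × Fin N, (2 * A : ℤ) ^ l * B := by
        refine Finset.sum_le_sum fun ik _ => ?_
        rw [abs_mul]
        exact mul_le_mul (abs_taylorMatrix_le hA hc N l ik) (hp ik) (abs_nonneg _) (by positivity)
    _ = m * N * B * (2 * A) ^ l := by
        rw [Finset.sum_const, Finset.card_univ, Fintype.card_prod, Fintype.card_fin,
          Fintype.card_fin, nsmul_eq_mul]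
        push_cast
        ring

theorem mul_le_two_mul_pow {a n : ℕ} (hn : 0 < n) : a * n ≤ (2 * a) ^ n := by
  rw [mul_pow, mul_comm]
  gcongr
  · exact Nat.lt_two_pow_self.le
  · exact Nat.le_self_pow hn.ne' a

theorem exists_taylorMatrix_mulVec_eq_zero (hm : 0 < m) (hA : 1 ≤ A)
    (hc : ∀ i n, |c i n| ≤ (A : ℤ) ^ n) :
    ∃ B : ℕ, ∀ n, 0 < n → ∃ p : Fin m × Fin (2 * n) → ℤ, p ≠ 0 ∧
      (∀ l < (2 * m - 1) * n, (taylorMatrix c (2 * n) *ᵥ p) l = 0) ∧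
      ∀ ik, |p ik| ≤ (B : ℤ) ^ n := by
  refine ⟨((2 * (2 * m)) * (2 * A) ^ (2 * m - 1)) ^ (2 * m - 1), fun n hn => ?_⟩
  have hk : 2 * m - 1 + 1 = 2 * m := by lia
  obtain ⟨p, hp, hAp, hbound⟩ := exists_int_vec_abs_le (k := 2 * m - 1) (n := n)
    (B := (2 * A) ^ ((2 * m - 1) * n)) (by lia) hn
    (by rw [hk, Fintype.card_prod, Fintype.card_fin, Fintype.card_fin]; ring)
    (Nat.one_le_pow _ _ (by lia))
    (A := Matrix.of fun l => taylorMatrix c (2 * n) l)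
    fun l ik => (abs_taylorMatrix_le hA hc (2 * n) l ik).trans (by
      exact_mod_cast Nat.pow_le_pow_right (by lia) l.2.le)
  refine ⟨p, hp, fun l hl => congrFun hAp ⟨l, hl⟩, fun ik => (hbound ik).trans ?_⟩
  rw [hk, ← Nat.cast_pow, Nat.cast_le, pow_right_comm, mul_pow _ _ n, ← pow_mul]
  gcongr
  exact mul_le_two_mul_pow hn

/-- `P` is an auxiliary form of order `n`: a nonzero form of degree less than `2 * n`, with
coefficients of size at most `(2 * n)! * C ^ n`, vanishing at the origin to order
`(2 * m - 1) * n`. -/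
structure IsAuxiliaryForm (φ : Fin m → PowerSeries ℚ) (C n : ℕ) (P : Fin m → ℤ[X]) : Prop where
  ne_zero : P ≠ 0
  natDegree_lt : ∀ i, (P i).natDegree < 2 * n
  abs_coeff_le : ∀ i k, |(P i).coeff k| ≤ (2 * n).factorial * (C : ℤ) ^ n
  X_pow_dvd : PowerSeries.X ^ ((2 * m - 1) * n) ∣ linearForm φ P
  abs_coeff_linearForm_le : ∀ l, |PowerSeries.coeff l (linearForm φ P)| * l.factorial ≤
    (2 * n).factorial * (C : ℚ) ^ n * (C : ℚ) ^ l

theorem exists_forall_abs_le_pow (hφ : ∀ i, IsExpType (φ i)) :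
    ∃ (A : ℕ) (c : Fin m → ℕ → ℤ), 1 ≤ A ∧
      (∀ i n, PowerSeries.coeff n (φ i) * n.factorial = c i n) ∧ ∀ i n, |c i n| ≤ (A : ℤ) ^ n := by
  choose C c hc using hφ
  refine ⟨1 + ∑ i, C i, c, by lia, fun i n => (hc i n).1, fun i n => (hc i n).2.trans ?_⟩
  have hle : C i ≤ 1 + ∑ i, C i :=
    (Finset.single_le_sum (fun _ _ => Nat.zero_le _) (Finset.mem_univ i)).trans (by lia)
  gcongr

theorem exists_isAuxiliaryForm (hm : 0 < m) (hφ : ∀ i, IsExpType (φ i)) :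
    ∃ C : ℕ, ∀ n, 0 < n → ∃ P, IsAuxiliaryForm φ C n P := by
  obtain ⟨A, c, hA, hc, hcA⟩ := exists_forall_abs_le_pow hφ
  obtain ⟨B, hB⟩ := exists_taylorMatrix_mulVec_eq_zero hm hA hcA
  refine ⟨2 * (m * 2) * B + B + 2 * A, fun n hn => ?_⟩
  obtain ⟨p, hp, hvanish, hpB⟩ := hB n hn
  have hcoeff := coeff_linearForm_factorialPoly_mul_factorial hc p
  refine ⟨fun i => factorialPoly fun k => p (i, k), ?_, ?_, fun i k => ?_, ?_, fun l => ?_⟩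
  · obtain ⟨ik, hik⟩ := Function.ne_iff.mp hp
    exact Function.ne_iff.mpr ⟨ik.1, factorialPoly_ne_zero _ (Function.ne_iff.mpr ⟨ik.2, hik⟩)⟩
  · exact fun i => natDegree_factorialPoly_lt _ (by lia)
  · refine (abs_coeff_factorialPoly_le _ (by positivity) (fun k => hpB (i, k)) k).trans ?_
    gcongr
    lia
  · refine PowerSeries.X_pow_dvd_iff.mpr fun l hl => ?_
    have hl0 := hcoeff l
    rw [hvanish l hl, Int.cast_zero, mul_zero] at hl0
    exact (mul_eq_zero.mp hl0).resolve_right (by positivity)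
  · have habs : |(taylorMatrix c (2 * n) *ᵥ p) l| ≤ (2 * (m * 2) * B : ℤ) ^ n * (2 * A) ^ l := by
      refine (abs_taylorMatrix_mulVec_le hA hcA hpB l).trans ?_
      rw [mul_pow _ (B : ℤ)]
      gcongr
      exact_mod_cast (mul_assoc m 2 n).symm.trans_le (mul_le_two_mul_pow hn)
    rw [← Nat.abs_cast l.factorial, ← abs_mul, hcoeff, abs_mul, Nat.abs_cast, mul_assoc]
    refine mul_le_mul_of_nonneg_left ?_ (by positivity)
    refine le_trans (b := (2 * (m * 2) * B : ℚ) ^ n * (2 * A) ^ l) (by exact_mod_cast habs) ?_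
    gcongr <;> norm_cast <;> lia

end AuxiliaryForm

/-! ### Heights -/

section Height

/-- The length of an integral polynomial: the sum of the absolute values of its coefficients. -/
noncomputable def coeffSum (p : ℤ[X]) : ℕ := p.sum fun _ c => c.natAbs

theorem coeffSum_eq_sum_range {p : ℤ[X]} {n : ℕ} (h : p.natDegree < n) :
    coeffSum p = ∑ i ∈ Finset.range n, (p.coeff i).natAbs :=
  p.sum_over_range' (fun _ => rfl) n h

theorem coeffSum_zero : coeffSum 0 = 0 := sum_zero_index _

theorem coeffSum_add_le (p q : ℤ[X]) : coeffSum (p + q) ≤ coeffSum p + coeffSum q := by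
  have hp := Nat.lt_succ_of_le (le_max_left p.natDegree q.natDegree)
  have hq := Nat.lt_succ_of_le (le_max_right p.natDegree q.natDegree)
  rw [coeffSum_eq_sum_range hp, coeffSum_eq_sum_range hq,
    coeffSum_eq_sum_range (Nat.lt_succ_of_le (natDegree_add_le p q)), ← Finset.sum_add_distrib]
  refine Finset.sum_le_sum fun i _ => ?_
  rw [coeff_add]
  exact Int.natAbs_add_le _ _

theorem coeffSum_sum_le {ι : Type*} (s : Finset ι) (p : ι → ℤ[X]) :
    coeffSum (∑ i ∈ s, p i) ≤ ∑ i ∈ s, coeffSum (p i) :=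
  Finset.le_sum_of_subadditive coeffSum coeffSum_zero.le coeffSum_add_le s p

theorem coeffSum_C_mul_le (c : ℤ) (p : ℤ[X]) : coeffSum (C c * p) ≤ c.natAbs * coeffSum p := by
  rw [coeffSum_eq_sum_range (Nat.lt_succ_of_le (natDegree_C_mul_le c p)),
    coeffSum_eq_sum_range p.natDegree.lt_succ_self, Finset.mul_sum]
  simp only [coeff_C_mul, Int.natAbs_mul, le_refl]

theorem coeffSum_X_mul (p : ℤ[X]) : coeffSum (X * p) = coeffSum p := by
  have h : (X * p).natDegree < p.natDegree + 1 + 1 := by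
    refine Nat.lt_succ_of_le (natDegree_mul_le.trans ?_)
    rw [natDegree_X, add_comm]
  rw [coeffSum_eq_sum_range h, coeffSum_eq_sum_range p.natDegree.lt_succ_self,
    Finset.sum_range_succ']
  simp only [coeff_X_mul, coeff_X_mul_zero, Int.natAbs_zero, add_zero]

theorem coeffSum_X_pow_mul (k : ℕ) (p : ℤ[X]) : coeffSum (X ^ k * p) = coeffSum p := by
  induction k with
  | zero => rw [pow_zero, one_mul]
  | succ k ih => rw [pow_succ', mul_assoc, coeffSum_X_mul, ih]

theorem coeffSum_mul_le (p q : ℤ[X]) : coeffSum (p * q) ≤ coeffSum p * coeffSum q := by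
  conv_lhs => rw [p.as_sum_range_C_mul_X_pow, Finset.sum_mul]
  refine (coeffSum_sum_le _ _).trans ?_
  rw [coeffSum_eq_sum_range p.natDegree.lt_succ_self, Finset.sum_mul]
  refine Finset.sum_le_sum fun i _ => ?_
  rw [mul_assoc, ← coeffSum_X_pow_mul i q]
  exact coeffSum_C_mul_le _ _

theorem coeffSum_polyEuler_le (p : ℤ[X]) :
    coeffSum (polyEuler ℤ p) ≤ p.natDegree * coeffSum p := by
  rw [coeffSum_eq_sum_range (Nat.lt_succ_of_le (natDegree_polyEuler_le p)),
    coeffSum_eq_sum_range p.natDegree.lt_succ_self, Finset.mul_sum]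
  refine Finset.sum_le_sum fun i hi => ?_
  rw [coeff_polyEuler, Int.natAbs_mul, Int.natAbs_natCast]
  exact Nat.mul_le_mul_right _ (Finset.mem_range_succ_iff.mp hi)

theorem coeffSum_le_of_forall_abs_coeff_le {p : ℤ[X]} {n b : ℕ} (hn : p.natDegree < n)
    (hb : ∀ k, |p.coeff k| ≤ b) : coeffSum p ≤ n * b := by
  rw [coeffSum_eq_sum_range hn]
  refine (Finset.sum_le_card_nsmul _ _ b fun i _ => ?_).trans_eq (by
    rw [Finset.card_range, smul_eq_mul])
  have hi := hb i
  rw [Int.abs_eq_natAbs] at hi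
  exact_mod_cast hi

theorem norm_aeval_le_coeffSum {p : ℤ[X]} {d : ℕ} (hd : p.natDegree ≤ d) {z : ℂ} {ρ : ℝ}
    (hρ : 1 ≤ ρ) (hz : ‖z‖ ≤ ρ) : ‖aeval z p‖ ≤ coeffSum p * ρ ^ d := by
  rw [aeval_eq_sum_range' (Nat.lt_succ_of_le hd), coeffSum_eq_sum_range (Nat.lt_succ_of_le hd)]
  push_cast
  rw [Finset.sum_mul]
  refine (norm_sum_le _ _).trans (Finset.sum_le_sum fun i hi => ?_)
  rw [zsmul_eq_mul, norm_mul, norm_pow, Complex.norm_intCast, Nat.cast_natAbs, Int.cast_abs]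
  gcongr
  calc ‖z‖ ^ i ≤ ρ ^ i := by gcongr
    _ ≤ ρ ^ d := pow_le_pow_right₀ hρ (Finset.mem_range_succ_iff.mp hi)

variable {ι : Type*} [Fintype ι] {a : Matrix ι ι ℤ[X]} {A B : ℕ} {P : ι → ℤ[X]} {d h : ℕ}

theorem natDegree_formDeriv_le (hA : ∀ j i, (a j i).natDegree ≤ A)
    (hd : ∀ i, (P i).natDegree ≤ d) (i : ι) :
    (formDeriv (polyEuler ℤ) a P i).natDegree ≤ d + A := by
  rw [formDeriv_apply]
  refine natDegree_add_le_of_degree_le (((natDegree_polyEuler_le _).trans (hd i)).trans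
    (Nat.le_add_right _ _)) (natDegree_sum_le_of_forall_le _ _ fun j _ => ?_)
  exact natDegree_mul_le.trans (add_le_add (hd j) (hA j i))

theorem coeffSum_formDeriv_le (hB : ∀ i, ∑ j, coeffSum (a j i) ≤ B)
    (hd : ∀ i, (P i).natDegree ≤ d) (hh : ∀ i, coeffSum (P i) ≤ h) (i : ι) :
    coeffSum (formDeriv (polyEuler ℤ) a P i) ≤ (d + B) * h := by
  have hvecMul := calc coeffSum ((P ᵥ* a) i) ≤ ∑ j, coeffSum (P j * a j i) := coeffSum_sum_le _ _
    _ ≤ ∑ j, coeffSum (a j i) * h := by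
      refine Finset.sum_le_sum fun j _ => (coeffSum_mul_le _ _).trans ?_
      rw [mul_comm]
      exact Nat.mul_le_mul_left _ (hh j)
    _ ≤ B * h := by
      rw [← Finset.sum_mul]
      exact Nat.mul_le_mul_right _ (hB i)
  rw [formDeriv_apply, add_mul]
  exact (coeffSum_add_le _ _).trans (add_le_add
    ((coeffSum_polyEuler_le _).trans (Nat.mul_le_mul (hd i) (hh i))) hvecMul)

theorem natDegree_iterate_formDeriv_le (hA : ∀ j i, (a j i).natDegree ≤ A)
    (hd : ∀ i, (P i).natDegree ≤ d) (k : ℕ) (i : ι) :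
    ((formDeriv (polyEuler ℤ) a)^[k] P i).natDegree ≤ d + A * k := by
  induction k generalizing i with
  | zero => exact hd i
  | succ k ih =>
    rw [Function.iterate_succ_apply', mul_add, mul_one, ← add_assoc]
    exact natDegree_formDeriv_le hA ih i

theorem coeffSum_iterate_formDeriv_le (hA : ∀ j i, (a j i).natDegree ≤ A)
    (hB : ∀ i, ∑ j, coeffSum (a j i) ≤ B) (hd : ∀ i, (P i).natDegree ≤ d)
    (hh : ∀ i, coeffSum (P i) ≤ h) {k N : ℕ} (hk : k ≤ N) (i : ι) :
    coeffSum ((formDeriv (polyEuler ℤ) a)^[k] P i) ≤ (d + A * N + B) ^ k * h := by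
  induction k generalizing i with
  | zero => rw [pow_zero, one_mul]; exact hh i
  | succ k ih =>
    rw [Function.iterate_succ_apply', pow_succ', mul_assoc]
    refine (coeffSum_formDeriv_le hB (natDegree_iterate_formDeriv_le hA hd k)
      (ih (Nat.le_of_succ_le hk)) i).trans ?_
    gcongr
    lia

end Height

/-! ### Nonvanishing of the derived forms at a point -/

section ZeroEstimate

theorem det_smul_single_eq_sum {A : Type*} [CommRing A] {m : ℕ} (N : Matrix (Fin m) (Fin m) A)
    (j : Fin m) : N.det • Pi.single j (1 : A) = ∑ k, N.adjugate j k • N k := by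
  have hrow := congrFun N.adjugate_mul j
  rw [Matrix.mul_apply_eq_vecMul, Matrix.vecMul_eq_sum] at hrow
  refine Eq.trans ?_ hrow.symm
  ext i
  simp [Matrix.one_apply, Pi.single_apply, eq_comm]

theorem iterate_formDeriv_smul {A ι : Type*} [CommRing A] [Fintype ι] (D : IntDerivation A)
    (a : Matrix ι ι A) (c : A) (P : ι → A) (s : ℕ) :
    (formDeriv D a)^[s] (c • P) = ∑ ij ∈ Finset.HasAntidiagonal.antidiagonal s,
      s.choose ij.1 • (D^[ij.1] c • (formDeriv D a)^[ij.2] P) := by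
  induction s with
  | zero => simp
  | succ s ih =>
    rw [Function.iterate_succ_apply', ih, map_sum, Finset.sum_antidiagonal_choose_succ_nsmul
      fun i j => D^[i] c • (formDeriv D a)^[j] P, ← Finset.sum_add_distrib]
    refine Finset.sum_congr rfl fun ij hij => ?_
    rw [map_nsmul, formDeriv_smul, nsmul_add, ← Function.iterate_succ_apply' D,
      ← Function.iterate_succ_apply' (formDeriv D a),
      Nat.choose_symm_of_eq_add (Finset.HasAntidiagonal.mem_antidiagonal.mp hij).symm]

theorem iterate_formDeriv_sum {A ι κ : Type*} [CommRing A] [Fintype ι] (D : IntDerivation A)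
    (a : Matrix ι ι A) (t : Finset κ) (P : κ → ι → A) (s : ℕ) :
    (formDeriv D a)^[s] (∑ i ∈ t, P i) = ∑ i ∈ t, (formDeriv D a)^[s] (P i) := by
  induction s with
  | zero => rfl
  | succ s ih => simp only [Function.iterate_succ_apply', ih, map_sum]

variable {m : ℕ}

theorem map_iterate_det_eq_zero {A K : Type*} [CommRing A] [Field K] {D : IntDerivation A}
    {a : Matrix (Fin m) (Fin m) A} {P : Fin m → A} {ψ : A →+* K} {β : Fin m → K} (hβ : β ≠ 0)
    {s : ℕ} (h : ∀ k < m + s, evalForm ψ β ((formDeriv D a)^[k] P) = 0) :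
    ψ (D^[s] (formMatrix D a P).det) = 0 := by
  induction s using Nat.strong_induction_on with
  | _ s ih =>
    obtain ⟨j, hj⟩ := Function.ne_iff.mp hβ
    have hzero : evalForm ψ β
        ((formDeriv D a)^[s] ((formMatrix D a P).det • Pi.single j 1)) = 0 := by
      rw [det_smul_single_eq_sum, iterate_formDeriv_sum, map_sum]
      refine Finset.sum_eq_zero fun k _ => ?_
      rw [iterate_formDeriv_smul, map_sum]
      refine Finset.sum_eq_zero fun uv huv => ?_
      have hsum := Finset.HasAntidiagonal.mem_antidiagonal.mp huv
      have hlt : uv.2 + k < m + s := by have := k.2; lia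
      have hrow : formMatrix D a P k = (formDeriv D a)^[k] P := rfl
      rw [map_nsmul, map_smulₛₗ, hrow, ← Function.iterate_add_apply,
        h _ hlt, smul_zero, nsmul_zero]
    rw [iterate_formDeriv_smul, map_sum, Finset.sum_eq_single (s, 0)] at hzero
    · rw [Nat.choose_self, one_nsmul, map_smulₛₗ, Function.iterate_zero_apply, evalForm_single,
        smul_eq_mul] at hzero
      exact (mul_eq_zero.mp hzero).resolve_right hj
    · intro uv huv hne
      have hsum := Finset.HasAntidiagonal.mem_antidiagonal.mp huv
      have hlt : uv.1 < s := by grind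
      rw [map_nsmul, map_smulₛₗ, ih _ hlt fun k hk => h k (by lia), zero_smul, nsmul_zero]
    · simp

theorem rootMultiplicity_le_natDegree {K : Type*} [Field K] (q : K[X]) (α : K) :
    rootMultiplicity α q ≤ q.natDegree := by
  classical
  rw [← count_roots]
  exact (Multiset.count_le_card _ _).trans (card_roots' q)

theorem eval_iterate_polyEuler_rootMultiplicity_ne_zero {K : Type*} [Field K] [CharZero K] {α : K}
    (hα : α ≠ 0) {q : K[X]} (hq : q ≠ 0) :
    eval α ((polyEuler K)^[rootMultiplicity α q] q) ≠ 0 := by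
  generalize hr : rootMultiplicity α q = r
  induction r generalizing q with
  | zero => exact fun h0 => ((rootMultiplicity_pos hq).mpr h0).ne' hr
  | succ r ih =>
    have hroot : q.IsRoot α := (rootMultiplicity_pos hq).mp (by lia)
    have hd : derivative q ≠ 0 := fun h0 => by
      have := rootMultiplicity_le_natDegree q α
      rw [derivative_eq_zero.mp h0] at this
      lia
    have hX : (X : K[X]) * derivative q ≠ 0 := mul_ne_zero X_ne_zero hd
    rw [Function.iterate_succ_apply, polyEuler_apply]
    apply ih hX
    rw [rootMultiplicity_mul hX, derivative_rootMultiplicity_of_root hroot, hr,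
      rootMultiplicity_eq_zero (by simpa using hα), zero_add, Nat.add_sub_cancel]

theorem map_iterate_polyEuler {R S : Type*} [CommRing R] [CommRing S] (f : R →+* S) (q : R[X])
    (s : ℕ) : ((polyEuler R)^[s] q).map f = (polyEuler S)^[s] (q.map f) := by
  have hf : Function.Semiconj (Polynomial.map f) (polyEuler R) (polyEuler S) := fun q => by
    rw [polyEuler_apply, polyEuler_apply, Polynomial.map_mul, map_X, derivative_map]
  exact hf.iterate_right s q

theorem exists_aeval_iterate_polyEuler_ne_zero {K : Type*} [Field K] [CharZero K] {α : K}
    (hα : α ≠ 0) {q : ℤ[X]} (hq : q ≠ 0) {M N : ℕ} (hM : X ^ M ∣ q) (hN : q.natDegree ≤ M + N) :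
    ∃ s ≤ N, aeval α ((polyEuler ℤ)^[s] q) ≠ 0 := by
  have hinj : Function.Injective (Int.castRingHom K) := Int.cast_injective
  have hqK := (Polynomial.map_ne_zero_iff hinj).mpr hq
  refine ⟨rootMultiplicity α (q.map (Int.castRingHom K)), ?_, ?_⟩
  · obtain ⟨q', rfl⟩ := hM
    rw [natDegree_X_pow_mul _ (right_ne_zero_of_mul hq), add_comm, Nat.add_le_add_iff_left] at hN
    rw [Polynomial.map_mul] at hqK ⊢
    rw [rootMultiplicity_mul hqK, rootMultiplicity_eq_zero (by simp [hα]), zero_add]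
    exact (rootMultiplicity_le_natDegree _ _).trans (natDegree_map_le.trans hN)
  · rw [aeval_def, eval₂_eq_eval_map, algebraMap_int_eq, map_iterate_polyEuler]
    exact eval_iterate_polyEuler_rootMultiplicity_ne_zero hα hqK

/-- `s` derivatives of the determinant cost `s` further forms, and the determinant cannot vanish
at `α` to an order larger than its degree, diminished by its order of vanishing at the origin. -/
theorem exists_evalForm_iterate_formDeriv_ne_zero {K : Type*} [Field K] [CharZero K]
    {a : Matrix (Fin m) (Fin m) ℤ[X]} {P : Fin m → ℤ[X]} {α : K} (hα : α ≠ 0) {β : Fin m → K}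
    (hβ : β ≠ 0) {M N : ℕ} (hdet : (formMatrix (polyEuler ℤ) a P).det ≠ 0)
    (hM : X ^ M ∣ (formMatrix (polyEuler ℤ) a P).det)
    (hN : (formMatrix (polyEuler ℤ) a P).det.natDegree ≤ M + N) :
    ∃ k ≤ m + N, evalForm (aeval α).toRingHom β ((formDeriv (polyEuler ℤ) a)^[k] P) ≠ 0 := by
  obtain ⟨s, hs, hne⟩ := exists_aeval_iterate_polyEuler_ne_zero hα hdet hM hN
  by_contra! h
  exact hne (map_iterate_det_eq_zero hβ fun k hk => h k (by lia))

theorem X_pow_dvd_det_formMatrix {φ : Fin m → PowerSeries ℚ} {a : Matrix (Fin m) (Fin m) ℤ[X]}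
    (hφ : IsSolution seriesEuler (a.map polyToSeries) φ) {j : Fin m}
    (hj : PowerSeries.constantCoeff (φ j) ≠ 0) {P : Fin m → ℤ[X]} {M : ℕ}
    (hP : PowerSeries.X ^ M ∣ linearForm φ P) :
    X ^ M ∣ (formMatrix (polyEuler ℤ) a P).det := by
  have hcramer := congrArg (linearForm φ) (det_smul_single_eq_sum (formMatrix (polyEuler ℤ) a P) j)
  simp only [linearForm, map_smulₛₗ, map_sum, evalForm_single, smul_eq_mul] at hcramer
  have hunit : IsUnit (φ j) := PowerSeries.isUnit_iff_constantCoeff.mpr hj.isUnit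
  have hdvd : PowerSeries.X ^ M ∣ polyToSeries (formMatrix (polyEuler ℤ) a P).det := by
    rw [← hunit.dvd_mul_right, hcramer]
    refine Finset.dvd_sum fun k _ => Dvd.dvd.mul_left ?_ _
    change _ ∣ linearForm φ ((formDeriv (polyEuler ℤ) a)^[k] P)
    rw [linearForm_iterate_formDeriv hφ]
    exact X_pow_dvd_iterate_seriesEuler hP k
  rw [X_pow_dvd_iff]
  intro l hl
  have hl0 := PowerSeries.X_pow_dvd_iff.mp hdvd l hl
  rw [coeff_polyToSeries] at hl0
  exact_mod_cast hl0

theorem natDegree_det_le {d : ℕ} {N : Matrix (Fin m) (Fin m) ℤ[X]}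
    (h : ∀ k i, (N k i).natDegree ≤ d) : N.det.natDegree ≤ m * d := by
  rw [Matrix.det_apply]
  refine natDegree_sum_le_of_forall_le _ _ fun s _ => ?_
  refine (natDegree_smul_le _ _).trans ((natDegree_prod_le _ _).trans ?_)
  refine (Finset.sum_le_card_nsmul _ _ d fun i _ => h _ _).trans_eq ?_
  rw [Finset.card_univ, Fintype.card_fin, smul_eq_mul]

end ZeroEstimate

/-! ### Factorial growth -/

section Growth

open Filter Asymptotics

/-- `f n` is at most of the order of `(n !) ^ s`, up to an exponential factor. -/
def HasFactorialGrowth (s : ℕ) (f : ℕ → ℝ) : Prop :=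
  ∃ E : ℝ, f =O[atTop] fun n => (n.factorial : ℝ) ^ s * E ^ n

namespace HasFactorialGrowth

variable {s t : ℕ} {f g : ℕ → ℝ}

theorem mono (hg : HasFactorialGrowth s g) (hfg : ∀ᶠ n in atTop, ‖f n‖ ≤ g n) :
    HasFactorialGrowth s f :=
  hg.imp fun _ hE => (IsBigO.of_norm_eventuallyLE hfg).trans hE

theorem mul (hf : HasFactorialGrowth s f) (hg : HasFactorialGrowth t g) :
    HasFactorialGrowth (s + t) fun n => f n * g n := by
  obtain ⟨E, hE⟩ := hf
  obtain ⟨F, hF⟩ := hg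
  refine ⟨E * F, (hE.mul hF).congr_right fun n => ?_⟩
  ring

theorem const (c : ℝ) : HasFactorialGrowth 0 fun _ => c := by
  refine ⟨1, ?_⟩
  simp only [pow_zero, one_pow, mul_one]
  exact isBigO_const_one ℝ c atTop

theorem const_pow (c : ℝ) : HasFactorialGrowth 0 fun n => c ^ n := by
  refine ⟨c, ?_⟩
  simp only [pow_zero, one_mul]
  exact isBigO_refl _ _

theorem const_pow_mul (c : ℝ) (k : ℕ) : HasFactorialGrowth 0 fun n => c ^ (k * n) := by
  simpa only [pow_mul] using const_pow (c ^ k)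

theorem prod {ι : Type*} (S : Finset ι) {F : ι → ℕ → ℝ} (h : ∀ i, HasFactorialGrowth s (F i)) :
    HasFactorialGrowth (S.card * s) fun n => ∏ i ∈ S, F i n := by
  classical
  induction S using Finset.induction_on with
  | empty => simpa only [Finset.card_empty, zero_mul, Finset.prod_empty] using const 1
  | insert i S hi ih =>
    simp only [Finset.prod_insert hi, Finset.card_insert_of_notMem hi]
    rw [add_mul, one_mul, add_comm]
    exact (h i).mul ih

theorem natCast : HasFactorialGrowth 0 fun n => (n : ℝ) :=
  (const_pow 2).mono <| .of_forall fun n => by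
    rw [Real.norm_natCast]
    exact_mod_cast n.lt_two_pow_self.le

theorem natCast_pow (k : ℕ) : HasFactorialGrowth 0 fun n => (n : ℝ) ^ k := by
  induction k with
  | zero => simpa only [pow_zero] using const 1
  | succ k ih => simpa only [pow_succ] using ih.mul natCast

theorem natCast_pow_self : HasFactorialGrowth 1 fun n => (n : ℝ) ^ n := by
  refine ⟨Real.exp 1, IsBigO.of_norm_le fun n => ?_⟩
  have hexp := Real.pow_div_factorial_le_exp (n : ℝ) n.cast_nonneg n
  rw [div_le_iff₀ (by positivity)] at hexp
  rw [Real.norm_of_nonneg (by positivity), pow_one, ← Real.exp_nat_mul, mul_one, mul_comm]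
  exact hexp

theorem mul_natCast_pow_add (a : ℝ) (c : ℕ) :
    HasFactorialGrowth 1 fun n => (a * n) ^ (n + c) := by
  simpa only [mul_pow, pow_add, mul_assoc] using
    (const_pow a).mul (natCast_pow_self.mul ((const (a ^ c)).mul (natCast_pow c)))

theorem factorial_two_mul : HasFactorialGrowth 2 fun n => ((2 * n).factorial : ℝ) := by
  refine ⟨4, IsBigO.of_norm_le fun n => ?_⟩
  have hcentral : (2 * n).factorial = n.factorial ^ 2 * n.centralBinom := by
    rw [← Nat.choose_mul_factorial_mul_factorial (show n ≤ 2 * n by lia), Nat.centralBinom,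
      show 2 * n - n = n by lia]
    ring
  rw [Real.norm_natCast, hcentral]
  exact_mod_cast Nat.mul_le_mul_left _ n.centralBinom_le_four_pow

theorem eventually_lt (hf : HasFactorialGrowth s f) :
    ∀ᶠ n in atTop, f n < (n.factorial : ℝ) ^ (s + 1) := by
  obtain ⟨E, hE⟩ := hf
  have hpow : (fun n : ℕ => E ^ n) =o[atTop] fun n => (n.factorial : ℝ) :=
    (isLittleO_iff_tendsto fun n hn => absurd hn (by positivity)).mpr
      (FloorSemiring.tendsto_pow_div_factorial_atTop E)
  have hlittle := hE.trans_isLittleO ((isBigO_refl _ atTop).mul_isLittleO hpow)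
  filter_upwards [hlittle.bound one_half_pos] with n hn
  have hpos : 0 < (n.factorial : ℝ) ^ (s + 1) := by positivity
  rw [← pow_succ, Real.norm_of_nonneg hpos.le] at hn
  linarith [Real.le_norm_self (f n)]

end HasFactorialGrowth

theorem factorial_pow_le_factorial_mul (s n : ℕ) : n.factorial ^ s ≤ (s * n).factorial := by
  have hdvd := Nat.prod_factorial_dvd_factorial_sum (Finset.range s) fun _ => n
  simp only [Finset.prod_const, Finset.sum_const, Finset.card_range, smul_eq_mul] at hdvd
  exact Nat.le_of_dvd (Nat.factorial_pos _) hdvd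

end Growth

/-! ### Siegel's method -/

section SiegelMethod

open Filter

variable {m : ℕ} {a : Matrix (Fin m) (Fin m) ℤ[X]} {φ : Fin m → PowerSeries ℚ}

/-- A system of exponential type series to which Siegel's method applies: it solves a linear
differential system, does not vanish at the origin, and the derivatives of any form vanishing
there to a high enough order are linearly independent. -/
structure IsSiegelNormal (a : Matrix (Fin m) (Fin m) ℤ[X]) (φ : Fin m → PowerSeries ℚ) :
    Prop where
  isExpType : ∀ i, IsExpType (φ i)
  isSolution : IsSolution seriesEuler (a.map polyToSeries) φ
  exists_constantCoeff_ne_zero : ∃ j, PowerSeries.constantCoeff (φ j) ≠ 0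
  eventually_det_ne_zero : ∀ᶠ n in atTop, ∀ P : Fin m → ℤ[X], P ≠ 0 →
    (∀ i, (P i).natDegree < 2 * n) → PowerSeries.X ^ ((2 * m - 1) * n) ∣ linearForm φ P →
    (formMatrix (polyEuler ℤ) a P).det ≠ 0

theorem exists_natDegree_le (a : Matrix (Fin m) (Fin m) ℤ[X]) :
    ∃ A, ∀ j i, (a j i).natDegree ≤ A :=
  ⟨Finset.univ.sup fun ji : Fin m × Fin m => (a ji.1 ji.2).natDegree, fun j i =>
    Finset.le_sup (f := fun ji : Fin m × Fin m => (a ji.1 ji.2).natDegree)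
      (Finset.mem_univ (j, i))⟩

theorem exists_sum_coeffSum_le (a : Matrix (Fin m) (Fin m) ℤ[X]) :
    ∃ B, ∀ i, ∑ j, coeffSum (a j i) ≤ B :=
  ⟨Finset.univ.sup fun i => ∑ j, coeffSum (a j i), fun i =>
    Finset.le_sup (f := fun i => ∑ j, coeffSum (a j i)) (Finset.mem_univ i)⟩

namespace IsAuxiliaryForm

variable {A B C n c k : ℕ} {P : Fin m → ℤ[X]}

theorem natDegree_iterate_formDeriv_le (hP : IsAuxiliaryForm φ C n P)
    (hA : ∀ j i, (a j i).natDegree ≤ A) (hk : k ≤ n + c) (hn : 0 < n) (i : Fin m) :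
    ((formDeriv (polyEuler ℤ) a)^[k] P i).natDegree ≤ (2 + A * (1 + c)) * n := by
  refine (_root_.natDegree_iterate_formDeriv_le hA (fun i => (hP.natDegree_lt i).le) k i).trans ?_
  calc 2 * n + A * k ≤ 2 * n + A * (n + c * n) := by gcongr; nlinarith
    _ = (2 + A * (1 + c)) * n := by ring

theorem coeffSum_iterate_formDeriv_le (hP : IsAuxiliaryForm φ C n P)
    (hA : ∀ j i, (a j i).natDegree ≤ A) (hB : ∀ i, ∑ j, coeffSum (a j i) ≤ B)
    (hk : k ≤ n + c) (hn : 0 < n) (i : Fin m) :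
    coeffSum ((formDeriv (polyEuler ℤ) a)^[k] P i) ≤
      ((2 + A * (1 + c) + B) * n) ^ (n + c) * (2 * n * ((2 * n).factorial * C ^ n)) := by
  refine (_root_.coeffSum_iterate_formDeriv_le hA hB (fun i => (hP.natDegree_lt i).le)
    (fun i => coeffSum_le_of_forall_abs_coeff_le (hP.natDegree_lt i) fun l => by
      exact_mod_cast hP.abs_coeff_le i l) hk i).trans (Nat.mul_le_mul_right _ ?_)
  have hle : 2 * n + A * (n + c) + B ≤ (2 + A * (1 + c) + B) * n :=
    calc 2 * n + A * (n + c) + B ≤ 2 * n + A * (n + c * n) + B * n := by gcongr <;> nlinarith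
      _ = (2 + A * (1 + c) + B) * n := by ring
  calc (2 * n + A * (n + c) + B) ^ k ≤ ((2 + A * (1 + c) + B) * n) ^ k := by gcongr
    _ ≤ ((2 + A * (1 + c) + B) * n) ^ (n + c) :=
        Nat.pow_le_pow_right (by positivity) hk

theorem norm_seriesEval_iterate_formDeriv_le (hP : IsAuxiliaryForm φ C n P)
    (hφ : IsSolution seriesEuler (a.map polyToSeries) φ) (hk : k ≤ n + c) (hn : 0 < n) (z : ℂ) :
    ‖seriesEval z (linearForm φ ((formDeriv (polyEuler ℤ) a)^[k] P))‖ *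
        ((2 * m - 1) * n).factorial ≤
      ((1 + c : ℝ) * n) ^ (n + c) * ((2 * n).factorial * (C : ℝ) ^ n) *
        ((3 * C : ℕ) * ‖z‖) ^ ((2 * m - 1) * n) * Real.exp ((3 * C : ℕ) * ‖z‖) := by
  have hcoeff (l : ℕ) : ((|PowerSeries.coeff l (linearForm φ P)| : ℚ) : ℝ) * l.factorial ≤
      ((2 * n).factorial * (C : ℝ) ^ n) * (C : ℝ) ^ l := by
    exact_mod_cast hP.abs_coeff_linearForm_le l
  rw [linearForm_iterate_formDeriv hφ]
  refine (norm_seriesEval_mul_factorial_le (X_pow_dvd_iterate_seriesEuler hP.X_pow_dvd k)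
    (abs_coeff_iterate_seriesEuler_le hcoeff k) z).trans ?_
  gcongr
  have hle : k ≤ (1 + c) * n := by nlinarith
  exact_mod_cast k.factorial_le_pow.trans
    ((Nat.pow_le_pow_left hle k).trans (Nat.pow_le_pow_right (by positivity) hk))

end IsAuxiliaryForm

theorem IsSiegelNormal.eventually_exists_evalForm_ne_zero (h : IsSiegelNormal a φ) {A : ℕ}
    (hA : ∀ j i, (a j i).natDegree ≤ A) {K : Type*} [Field K] [CharZero K] {α : K} (hα : α ≠ 0)
    {β : Fin m → K} (hβ : β ≠ 0) (C : ℕ) :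
    ∀ᶠ n in atTop, ∀ P, IsAuxiliaryForm φ C n P → ∃ k ≤ n + (m + m * (A * m)),
      evalForm (aeval α).toRingHom β ((formDeriv (polyEuler ℤ) a)^[k] P) ≠ 0 := by
  obtain ⟨j, hj⟩ := h.exists_constantCoeff_ne_zero
  filter_upwards [h.eventually_det_ne_zero] with n hn P hP
  have hdeg : (formMatrix (polyEuler ℤ) a P).det.natDegree ≤
      (2 * m - 1) * n + (n + m * (A * m)) := by
    have hPn i : (P i).natDegree ≤ 2 * n := (hP.natDegree_lt i).le
    refine (natDegree_det_le (d := 2 * n + A * m) fun k i =>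
      (natDegree_iterate_formDeriv_le hA hPn k i).trans ?_).trans_eq ?_
    · gcongr
      exact k.2.le
    · have hm : 2 * m = 2 * m - 1 + 1 := by have := j.pos; lia
      calc m * (2 * n + A * m) = 2 * m * n + m * (A * m) := by ring
        _ = (2 * m - 1 + 1) * n + m * (A * m) := by rw [← hm]
        _ = (2 * m - 1) * n + (n + m * (A * m)) := by ring
  obtain ⟨k, hk, hne⟩ := exists_evalForm_iterate_formDeriv_ne_zero hα hβ
    (hn P hP.ne_zero hP.natDegree_lt hP.X_pow_dvd)
    (X_pow_dvd_det_formMatrix h.isSolution hj hP.X_pow_dvd) hdeg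
  exact ⟨k, by lia, hne⟩

theorem IsSiegelNormal.exists_forms (h : IsSiegelNormal a φ) {K : Type*} [Field K] [CharZero K]
    {α : K} (hα : α ≠ 0) {β : Fin m → K} (hβ : β ≠ 0) (z : ℂ) :
    ∃ (N : ℕ) (u v : ℕ → ℝ), HasFactorialGrowth 3 u ∧ HasFactorialGrowth 3 v ∧
      ∀ᶠ n in atTop, ∃ Q : Fin m → ℤ[X], (∀ i, (Q i).natDegree ≤ N * n) ∧
        (∀ i, (coeffSum (Q i) : ℝ) ≤ u n) ∧ evalForm (aeval α).toRingHom β Q ≠ 0 ∧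
        ‖seriesEval z (linearForm φ Q)‖ * ((2 * m - 1) * n).factorial ≤ v n := by
  obtain ⟨j, -⟩ := h.exists_constantCoeff_ne_zero
  obtain ⟨A, hA⟩ := exists_natDegree_le a
  obtain ⟨B, hB⟩ := exists_sum_coeffSum_le a
  obtain ⟨C, hC⟩ := exists_isAuxiliaryForm j.pos h.isExpType
  set c := m + m * (A * m)
  refine ⟨2 + A * (1 + c),
    fun n => ((2 + A * (1 + c) + B : ℕ) * n) ^ (n + c) * (2 * n * ((2 * n).factorial * C ^ n)),
    fun n => ((1 + c : ℝ) * n) ^ (n + c) * ((2 * n).factorial * (C : ℝ) ^ n) *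
      ((3 * C : ℕ) * ‖z‖) ^ ((2 * m - 1) * n) * Real.exp ((3 * C : ℕ) * ‖z‖), ?_, ?_, ?_⟩
  · exact (HasFactorialGrowth.mul_natCast_pow_add _ c).mul
      (((HasFactorialGrowth.const 2).mul .natCast).mul
        (HasFactorialGrowth.factorial_two_mul.mul (.const_pow C)))
  · exact (((HasFactorialGrowth.mul_natCast_pow_add _ c).mul
      (HasFactorialGrowth.factorial_two_mul.mul (.const_pow C))).mul
        (.const_pow_mul _ _)).mul (.const _)
  · filter_upwards [h.eventually_exists_evalForm_ne_zero hA hα hβ C, eventually_gt_atTop 0]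
      with n hne hn
    obtain ⟨P, hP⟩ := hC n hn
    obtain ⟨k, hk, hk0⟩ := hne P hP
    refine ⟨(formDeriv (polyEuler ℤ) a)^[k] P, hP.natDegree_iterate_formDeriv_le hA hk hn,
      fun i => ?_, hk0, hP.norm_seriesEval_iterate_formDeriv_le h.isSolution hk hn z⟩
    exact_mod_cast hP.coeffSum_iterate_formDeriv_le hA hB hk hn i

theorem one_le_prod_norm_embeddings {K : Type*} [Field K] [NumberField K] {x : K} (hx : x ≠ 0)
    (hi : IsIntegral ℤ x) : 1 ≤ ∏ τ : K →ₐ[ℚ] ℂ, ‖τ x‖ := by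
  obtain ⟨y, hy⟩ := IsIntegrallyClosed.isIntegral_iff.mp (Algebra.isIntegral_norm ℚ hi)
  have hy0 : y ≠ 0 := by
    rintro rfl
    rw [map_zero] at hy
    exact hx (Algebra.norm_eq_zero_iff.mp hy.symm)
  rw [← norm_prod, ← Algebra.norm_eq_prod_embeddings ℚ ℂ x, ← hy]
  simp only [algebraMap_int_eq, eq_intCast, eq_ratCast, Rat.cast_intCast, Complex.norm_intCast]
  exact_mod_cast Int.one_le_abs hy0

theorem le_mul_prod_norm_embeddings {K : Type*} [Field K] [NumberField K] {x : K} (hx : x ≠ 0)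
    (hi : IsIntegral ℤ x) [DecidableEq (K →ₐ[ℚ] ℂ)] {σ : K →ₐ[ℚ] ℂ} {M V : ℝ} (hM : 0 ≤ M)
    {U : (K →ₐ[ℚ] ℂ) → ℝ} (hσ : ‖σ x‖ * M ≤ V) (hU : ∀ τ, ‖τ x‖ ≤ U τ) :
    M ≤ V * ∏ τ ∈ Finset.univ.erase σ, U τ := by
  have hprod := one_le_prod_norm_embeddings hx hi
  rw [← Finset.mul_prod_erase _ _ (Finset.mem_univ σ)] at hprod
  have hV : 0 ≤ V := (mul_nonneg (norm_nonneg _) hM).trans hσ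
  calc M ≤ M * (‖σ x‖ * ∏ τ ∈ Finset.univ.erase σ, ‖τ x‖) := le_mul_of_one_le_right hM hprod
    _ = (‖σ x‖ * M) * ∏ τ ∈ Finset.univ.erase σ, ‖τ x‖ := by ring
    _ ≤ V * ∏ τ ∈ Finset.univ.erase σ, U τ := by gcongr with τ; exact hU τ

theorem isIntegral_pow_mul_aeval {K : Type*} [Field K] {D : ℤ} {α : K}
    (hα : IsIntegral ℤ (D * α)) {p : ℤ[X]} {N : ℕ} (hp : p.natDegree ≤ N) :
    IsIntegral ℤ ((D : K) ^ N * aeval α p) := by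
  rw [aeval_eq_sum_range' (Nat.lt_succ_of_le hp), Finset.mul_sum]
  refine IsIntegral.sum _ fun i hi => ?_
  have hi' : i ≤ N := Nat.lt_succ_iff.mp (Finset.mem_range.mp hi)
  have hterm : (D : K) ^ N * (p.coeff i • α ^ i) =
      ((p.coeff i * D ^ (N - i) : ℤ) : K) * (D * α) ^ i := by
    conv_lhs => rw [← Nat.sub_add_cancel hi', pow_add, zsmul_eq_mul]
    push_cast
    ring
  rw [hterm]
  exact (isIntegral_algebraMap (R := ℤ) (A := K)).mul (hα.pow i)

section NumberField

variable {K : Type*} [Field K] [NumberField K] {α : K} {β : Fin m → K}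

theorem exists_isIntegral_pow_mul_evalForm (α : K) (β : Fin m → K) :
    ∃ D : ℤ, D ≠ 0 ∧ ∀ (N : ℕ) (Q : Fin m → ℤ[X]), (∀ i, (Q i).natDegree ≤ N) →
      IsIntegral ℤ ((D : K) ^ (N + 1) * evalForm (aeval α).toRingHom β Q) := by
  classical
  obtain ⟨D, hD0, hD⟩ := exists_integral_multiples ℤ ℚ (insert α (Finset.univ.image β))
  simp only [zsmul_eq_mul] at hD
  refine ⟨D, hD0, fun N Q hQ => ?_⟩
  rw [evalForm_apply, Finset.mul_sum]
  refine IsIntegral.sum _ fun i _ => ?_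
  rw [pow_succ, mul_mul_mul_comm]
  exact (isIntegral_pow_mul_aeval (hD α (Finset.mem_insert_self _ _)) (hQ i)).mul
    (hD _ (Finset.mem_insert_of_mem (Finset.mem_image_of_mem _ (Finset.mem_univ i))))

theorem map_evalForm_aeval (τ : K →ₐ[ℚ] ℂ) (α : K) (β : Fin m → K) (Q : Fin m → ℤ[X]) :
    τ (evalForm (aeval α).toRingHom β Q) = ∑ i, aeval (τ α) (Q i) * τ (β i) := by
  have haeval (p : ℤ[X]) : τ (aeval α p) = aeval (τ α) p :=
    (aeval_algHom_apply (τ.restrictScalars ℤ) α p).symm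
  rw [evalForm_apply]
  simp only [map_sum, map_mul, AlgHom.toRingHom_eq_coe, RingHom.coe_coe, haeval]

theorem seriesEval_linearForm_eq_mul (hφ : ∀ i, IsExpType (φ i)) {σ : K →ₐ[ℚ] ℂ} {l : ℂ}
    (hval : ∀ i, seriesEval (σ α) (φ i) = l * σ (β i)) (Q : Fin m → ℤ[X]) :
    seriesEval (σ α) (linearForm φ Q) = l * σ (evalForm (aeval α).toRingHom β Q) := by
  rw [seriesEval_linearForm hφ, map_evalForm_aeval, Finset.mul_sum]
  exact Finset.sum_congr rfl fun i _ => by rw [hval, mul_left_comm]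

theorem norm_map_evalForm_le (τ : K →ₐ[ℚ] ℂ) {Q : Fin m → ℤ[X]} {N : ℕ} {u : ℝ}
    (hN : ∀ i, (Q i).natDegree ≤ N) (hu : ∀ i, (coeffSum (Q i) : ℝ) ≤ u) :
    ‖τ (evalForm (aeval α).toRingHom β Q)‖ ≤ u * max 1 ‖τ α‖ ^ N * ∑ i, ‖τ (β i)‖ := by
  rw [map_evalForm_aeval, Finset.mul_sum]
  refine (norm_sum_le _ _).trans (Finset.sum_le_sum fun i _ => ?_)
  rw [norm_mul]
  gcongr
  refine (norm_aeval_le_coeffSum (hN i) (le_max_left _ _) (le_max_right _ _)).trans ?_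
  gcongr
  exact hu i

/-- Siegel's method: the product formula bounds the value of a form at one embedding from below
by its values at the others. -/
theorem IsSiegelNormal.two_mul_lt (h : IsSiegelNormal a φ) (σ : K →ₐ[ℚ] ℂ) (hα : α ≠ 0)
    (hβ : β ≠ 0) {l : ℂ} (hl : l ≠ 0) (hval : ∀ i, seriesEval (σ α) (φ i) = l * σ (β i)) :
    2 * m < 3 * Module.finrank ℚ K + 2 := by
  classical
  by_contra! hm
  obtain ⟨N, u, v, hu, hv, hforms⟩ := h.exists_forms hα hβ (σ α)
  obtain ⟨D, hD0, hD⟩ := exists_isIntegral_pow_mul_evalForm α β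
  have hcard : 3 + (Finset.univ.erase σ).card * 3 = 3 * Module.finrank ℚ K := by
    rw [← AlgHom.card ℚ K ℂ, ← Finset.card_univ, ← Finset.card_erase_add_one (Finset.mem_univ σ)]
    ring
  let W (n : ℕ) : ℝ := |(D : ℝ)| ^ (N * n) * |(D : ℝ)|
  let U (τ : K →ₐ[ℚ] ℂ) (n : ℕ) : ℝ := W n * (u n * max 1 ‖τ α‖ ^ (N * n) * ∑ i, ‖τ (β i)‖)
  let V (n : ℕ) : ℝ := W n * (‖l‖⁻¹ * v n)
  have hW : HasFactorialGrowth 0 W := (HasFactorialGrowth.const_pow_mul _ _).mul (.const _)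
  have hU (τ) : HasFactorialGrowth (0 + 3) (U τ) := hW.mul
    ((hu.mul (.const_pow_mul _ _)).mul (.const _))
  have hV : HasFactorialGrowth (0 + (0 + 3)) V := hW.mul ((HasFactorialGrowth.const _).mul hv)
  have hgrowth := (hV.mul (HasFactorialGrowth.prod (Finset.univ.erase σ) hU)).eventually_lt
  simp only [zero_add, hcard] at hgrowth
  obtain ⟨n, hlt, Q, hQN, hQu, hQ, hQv⟩ := (hgrowth.and hforms).exists
  set x := (D : K) ^ (N * n + 1) * evalForm (aeval α).toRingHom β Q with hx
  have hτx (τ : K →ₐ[ℚ] ℂ) : ‖τ x‖ = W n * ‖τ (evalForm (aeval α).toRingHom β Q)‖ := by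
    rw [hx, map_mul, norm_mul, map_pow, map_intCast, norm_pow, Complex.norm_intCast, pow_succ]
  have hσx : ‖σ x‖ * ((2 * m - 1) * n).factorial ≤ V n := by
    rw [seriesEval_linearForm_eq_mul h.isExpType hval, norm_mul, mul_assoc,
      ← le_inv_mul_iff₀ (norm_pos_iff.mpr hl)] at hQv
    rw [hτx, mul_assoc]
    exact mul_le_mul_of_nonneg_left hQv (by positivity)
  have hUx (τ : K →ₐ[ℚ] ℂ) : ‖τ x‖ ≤ U τ n := by
    rw [hτx]
    exact mul_le_mul_of_nonneg_left (norm_map_evalForm_le τ hQN hQu) (by positivity)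
  have hx0 : x ≠ 0 := mul_ne_zero (pow_ne_zero _ (Int.cast_ne_zero.mpr hD0)) hQ
  have hbound := le_mul_prod_norm_embeddings hx0 (hD _ Q hQN) (Nat.cast_nonneg _) hσx hUx
  have hfactorial : n.factorial ^ (3 * Module.finrank ℚ K + 1) ≤ ((2 * m - 1) * n).factorial :=
    (Nat.pow_le_pow_right n.factorial_pos (by lia)).trans (factorial_pow_le_factorial_mul _ _)
  exact absurd (hbound.trans_lt hlt) (not_lt.mpr (by exact_mod_cast hfactorial))

end NumberField

end SiegelMethod

/-! ### The exponential function -/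

section Exponential

/-- The power series of `exp (u * x)`. -/
noncomputable def expSeries (u : ℕ) : PowerSeries ℚ :=
  PowerSeries.mk fun n => (u : ℚ) ^ n / n.factorial

theorem isExpType_expSeries (u : ℕ) : IsExpType (expSeries u) := by
  refine ⟨u, fun n => (u : ℤ) ^ n, fun n => ⟨?_, ?_⟩⟩
  · rw [expSeries, PowerSeries.coeff_mk, div_mul_cancel₀ _ (by positivity)]
    push_cast
    rfl
  · rw [abs_pow, Nat.abs_cast]

theorem constantCoeff_expSeries (u : ℕ) : PowerSeries.constantCoeff (expSeries u) = 1 := by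
  rw [← PowerSeries.coeff_zero_eq_constantCoeff_apply, expSeries, PowerSeries.coeff_mk, pow_zero,
    Nat.factorial_zero, Nat.cast_one, div_one]

theorem seriesEuler_expSeries (u : ℕ) :
    seriesEuler (expSeries u) = (u : PowerSeries ℚ) * PowerSeries.X * expSeries u := by
  ext n
  rw [coeff_seriesEuler, mul_assoc, ← map_natCast (PowerSeries.C (R := ℚ)), PowerSeries.coeff_C_mul]
  cases n with
  | zero => rw [Nat.cast_zero, zero_mul, PowerSeries.coeff_zero_X_mul, mul_zero]
  | succ n =>
    rw [PowerSeries.coeff_succ_X_mul, expSeries, PowerSeries.coeff_mk, PowerSeries.coeff_mk,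
      Nat.factorial_succ]
    push_cast
    field_simp
    ring

theorem seriesEval_expSeries (z : ℂ) (u : ℕ) : seriesEval z (expSeries u) = Complex.exp z ^ u := by
  rw [← Complex.exp_nat_mul, Complex.exp_eq_exp_ℂ, NormedSpace.exp_eq_tsum_div, seriesEval]
  refine tsum_congr fun n => ?_
  rw [expSeries, PowerSeries.coeff_mk, mul_pow]
  push_cast
  ring

variable {m : ℕ}

/-- The matrix of the differential system satisfied by the functions `exp (u i * x)`. -/
noncomputable def expSystem (u : Fin m → ℕ) : Matrix (Fin m) (Fin m) ℤ[X] :=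
  Matrix.diagonal fun i => (u i : ℤ[X]) * X

theorem isSolution_expSystem (u : Fin m → ℕ) :
    IsSolution seriesEuler ((expSystem u).map polyToSeries) fun i => expSeries (u i) := fun j => by
  rw [expSystem, Matrix.diagonal_map (map_zero _), Matrix.mulVec_diagonal, map_mul, map_natCast,
    polyToSeries_X]
  exact seriesEuler_expSeries (u j)

theorem natDegree_natCast_mul_X_le (c : ℕ) : ((c : ℤ[X]) * X).natDegree ≤ 1 := by
  rw [← C_eq_natCast]
  exact (natDegree_C_mul_le _ _).trans natDegree_X_le

theorem formDeriv_expSystem_apply (u : Fin m → ℕ) (P : Fin m → ℤ[X]) (i : Fin m) :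
    formDeriv (polyEuler ℤ) (expSystem u) P i = polyEuler ℤ (P i) + P i * ((u i : ℤ[X]) * X) := by
  rw [formDeriv_apply, expSystem, Matrix.vecMul_diagonal]

theorem natDegree_iterate_formDeriv_expSystem_le (u : Fin m → ℕ) (P : Fin m → ℤ[X]) (i : Fin m)
    (k : ℕ) :
    ((formDeriv (polyEuler ℤ) (expSystem u))^[k] P i).natDegree ≤ (P i).natDegree + k := by
  induction k with
  | zero => exact le_rfl
  | succ k ih =>
    rw [Function.iterate_succ_apply', formDeriv_expSystem_apply]
    refine natDegree_add_le_of_degree_le ((natDegree_polyEuler_le _).trans (by lia)) ?_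
    exact natDegree_mul_le.trans
      ((add_le_add ih (natDegree_natCast_mul_X_le _)).trans_eq (add_assoc _ _ _))

theorem coeff_iterate_formDeriv_expSystem (u : Fin m → ℕ) (P : Fin m → ℤ[X]) (i : Fin m) (k : ℕ) :
    ((formDeriv (polyEuler ℤ) (expSystem u))^[k] P i).coeff ((P i).natDegree + k) =
      (u i : ℤ) ^ k * (P i).leadingCoeff := by
  induction k with
  | zero => rw [pow_zero, one_mul]; rfl
  | succ k ih =>
    have hdeg := natDegree_iterate_formDeriv_expSystem_le u P i k
    rw [Function.iterate_succ_apply', formDeriv_expSystem_apply, coeff_add, coeff_polyEuler,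
      coeff_eq_zero_of_natDegree_lt (by lia), mul_zero, zero_add, ← mul_assoc, ← add_assoc,
      coeff_mul_X, ← C_eq_natCast, coeff_mul_C, ih]
    ring

/-- The coefficients of highest possible degree form a Vandermonde matrix. -/
theorem det_formMatrix_expSystem_ne_zero {u : Fin m → ℕ} (hu : Function.Injective u)
    {P : Fin m → ℤ[X]} (hP : ∀ i, P i ≠ 0) :
    (formMatrix (polyEuler ℤ) (expSystem u) P).det ≠ 0 := by
  intro hdet
  obtain ⟨q, hq, hPq⟩ := Matrix.exists_mulVec_eq_zero_iff.mpr hdet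
  obtain ⟨i, hi⟩ := Function.ne_iff.mp hq
  obtain ⟨j, hj, hmax⟩ := (Finset.univ.filter fun i => q i ≠ 0).exists_max_image
    (fun i => (P i).natDegree + (q i).natDegree) ⟨i, by simpa using hi⟩
  simp only [Finset.mem_filter, Finset.mem_univ, true_and] at hj hmax
  set e := (P j).natDegree + (q j).natDegree with he
  have hvandermonde := Matrix.eq_zero_of_forall_pow_sum_mul_pow_eq_zero (R := ℤ)
    (f := fun i => (u i : ℤ))
    (v := fun i => (P i).leadingCoeff * (q i).coeff (e - (P i).natDegree))
    (Nat.cast_injective.comp hu) fun k => by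
      have hk := congrArg (coeff · (e + k)) (congrFun hPq k)
      simp only [formMatrix, Matrix.mulVec, dotProduct, Matrix.of_apply, finsetSum_coeff,
        Pi.zero_apply, coeff_zero] at hk
      rw [← hk]
      refine Finset.sum_congr rfl fun i _ => ?_
      rcases eq_or_ne (q i) 0 with hqi | hqi
      · rw [hqi, coeff_zero, mul_zero, zero_mul, mul_zero, coeff_zero]
      · have hle := hmax i hqi
        rw [show e + (k : ℕ) = (P i).natDegree + k + (e - (P i).natDegree) by lia,
          coeff_mul_add_eq_of_natDegree_le (natDegree_iterate_formDeriv_expSystem_le u P i k)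
            (by lia), coeff_iterate_formDeriv_expSystem]
        ring
  have hlead := congrFun hvandermonde j
  rw [Pi.zero_apply, he, Nat.add_sub_cancel_left] at hlead
  exact mul_ne_zero (leadingCoeff_ne_zero.mpr (hP j)) (leadingCoeff_ne_zero.mpr hj) hlead

theorem le_of_X_pow_dvd_linearForm_expSeries {s n M : ℕ} {u : Fin s → ℕ}
    (hu : Function.Injective u) (hs : 0 < s) {P : Fin s → ℤ[X]} (hP : ∀ i, P i ≠ 0)
    (hd : ∀ i, (P i).natDegree ≤ n)
    (hM : PowerSeries.X ^ M ∣ linearForm (fun i => expSeries (u i)) P) : M ≤ s * (n + s) := by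
  have hdvd := X_pow_dvd_det_formMatrix (isSolution_expSystem u) (j := ⟨0, hs⟩)
    (by rw [constantCoeff_expSeries]; exact one_ne_zero) hM
  have hle := natDegree_le_of_dvd hdvd (det_formMatrix_expSystem_ne_zero hu hP)
  rw [natDegree_X_pow] at hle
  refine hle.trans (natDegree_det_le fun k i => ?_)
  exact (natDegree_iterate_formDeriv_expSystem_le u P i k).trans (add_le_add (hd i) k.2.le)

theorem linearForm_comp_orderEmbOfFin (φ : Fin m → PowerSeries ℚ) {P : Fin m → ℤ[X]}
    {S : Finset (Fin m)} (hS : ∀ i ∉ S, P i = 0) :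
    linearForm (φ ∘ S.orderEmbOfFin rfl) (P ∘ S.orderEmbOfFin rfl) = linearForm φ P := by
  simp only [linearForm, evalForm_apply]
  rw [← Finset.sum_subset S.subset_univ fun i _ hi => by rw [hS i hi, map_zero, zero_mul]]
  conv_rhs => rw [← Finset.map_orderEmbOfFin_univ S rfl, Finset.sum_map]
  rfl

theorem forall_ne_zero_of_X_pow_dvd_linearForm_expSeries {u : Fin m → ℕ}
    (hu : Function.Injective u) {n : ℕ} (hn : m * m < n) {P : Fin m → ℤ[X]} (hP : P ≠ 0)
    (hd : ∀ i, (P i).natDegree < 2 * n)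
    (hX : PowerSeries.X ^ ((2 * m - 1) * n) ∣ linearForm (fun i => expSeries (u i)) P)
    (i : Fin m) : P i ≠ 0 := by
  classical
  intro hi
  let S := Finset.univ.filter fun i => P i ≠ 0
  have hS (i) : i ∈ S ↔ P i ≠ 0 := by simp only [S, Finset.mem_filter, Finset.mem_univ, true_and]
  have hpos : 0 < S.card := by
    obtain ⟨j, hj⟩ := Function.ne_iff.mp hP
    exact Finset.card_pos.mpr ⟨j, (hS j).mpr hj⟩
  have hlt : S.card < m := by
    have hssub : S ⊂ Finset.univ := Finset.filter_ssubset.mpr ⟨i, Finset.mem_univ i, not_not.mpr hi⟩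
    simpa only [Finset.card_univ, Fintype.card_fin] using Finset.card_lt_card hssub
  rw [← linearForm_comp_orderEmbOfFin _ fun i hi => not_not.mp (mt (hS i).mpr hi)] at hX
  have hle := le_of_X_pow_dvd_linearForm_expSeries (hu.comp (S.orderEmbOfFin rfl).injective) hpos
    (fun i => (hS _).mp (S.orderEmbOfFin_mem rfl i)) (fun i => (hd _).le) hX
  have hcard : S.card * (2 * n + S.card) ≤ (m - 1) * (2 * n) + m * m := by
    rw [mul_add]
    gcongr
    lia
  have hsplit : (2 * m - 1) * n = (m - 1) * (2 * n) + n := by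
    rw [show 2 * m - 1 = (m - 1) * 2 + 1 by lia]
    ring
  lia

theorem isSiegelNormal_expSystem (hm : 0 < m) {u : Fin m → ℕ} (hu : Function.Injective u) :
    IsSiegelNormal (expSystem u) fun i => expSeries (u i) where
  isExpType i := isExpType_expSeries (u i)
  isSolution := isSolution_expSystem u
  exists_constantCoeff_ne_zero := ⟨⟨0, hm⟩, by
    rw [constantCoeff_expSeries]
    exact one_ne_zero⟩
  eventually_det_ne_zero := by
    filter_upwards [Filter.eventually_gt_atTop (m * m)] with n hn P hP hd hX
    exact det_formMatrix_expSystem_ne_zero hu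
      (forall_ne_zero_of_X_pow_dvd_linearForm_expSeries hu hn hP hd hX)

theorem exp_ne_of_numberField {K : Type*} [Field K] [NumberField K] (σ : K →ₐ[ℚ] ℂ) {α : K}
    (hα : α ≠ 0) (β : K) : Complex.exp (σ α) ≠ σ β := by
  intro h
  let m := 3 * Module.finrank ℚ K + 2
  have hm : 0 < m := by lia
  have hval (i : Fin m) : seriesEval (σ α) (expSeries i) = 1 * σ (β ^ (i : ℕ)) := by
    rw [seriesEval_expSeries, h, one_mul, map_pow]
  have hβ : (fun i : Fin m => β ^ (i : ℕ)) ≠ 0 :=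
    Function.ne_iff.mpr ⟨⟨0, hm⟩, by rw [pow_zero]; exact one_ne_zero⟩
  have hlt := (isSiegelNormal_expSystem hm Fin.val_injective).two_mul_lt σ hα hβ one_ne_zero hval
  lia

end Exponential

/-! ### The Bessel equation of order zero -/

section BesselSeries

/-- The even power series `∑ uₖ * X ^ (2 * k)`. -/
noncomputable def evenSeries : (ℕ → ℚ) →+ PowerSeries ℚ where
  toFun u := PowerSeries.mk fun n => if Even n then u (n / 2) else 0
  map_zero' := by
    ext n
    rw [PowerSeries.coeff_mk, Pi.zero_apply, ite_self, map_zero]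
  map_add' u v := by
    ext n
    simp only [PowerSeries.coeff_mk, map_add, Pi.add_apply]
    split_ifs
    · rfl
    · rw [add_zero]

theorem coeff_evenSeries (u : ℕ → ℚ) (n : ℕ) :
    PowerSeries.coeff n (evenSeries u) = if Even n then u (n / 2) else 0 :=
  PowerSeries.coeff_mk n fun n => if Even n then u (n / 2) else 0

theorem constantCoeff_evenSeries (u : ℕ → ℚ) : PowerSeries.constantCoeff (evenSeries u) = u 0 := by
  rw [← PowerSeries.coeff_zero_eq_constantCoeff_apply, coeff_evenSeries, if_pos Even.zero]

theorem seriesEuler_evenSeries (u : ℕ → ℚ) :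
    seriesEuler (evenSeries u) = evenSeries fun k => 2 * k * u k := by
  ext n
  rw [coeff_seriesEuler, coeff_evenSeries, coeff_evenSeries]
  split_ifs with h
  · obtain ⟨k, rfl⟩ := h
    rw [← two_mul, Nat.mul_div_cancel_left _ two_pos]
    push_cast
    ring
  · rw [mul_zero]

theorem polyToSeries_four_mul_X_sq_mul_evenSeries (u : ℕ → ℚ) :
    polyToSeries (4 * X ^ 2) * evenSeries u =
      evenSeries fun k => if k = 0 then 0 else 4 * u (k - 1) := by
  have h : polyToSeries (4 * X ^ 2) * evenSeries u =
      PowerSeries.C 4 * evenSeries u * PowerSeries.X ^ 2 := by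
    rw [map_mul, map_pow, polyToSeries_X, map_ofNat, map_ofNat]
    ring
  ext n
  rw [h, PowerSeries.coeff_mul_X_pow', PowerSeries.coeff_C_mul, coeff_evenSeries,
    coeff_evenSeries]
  rcases lt_or_ge n 2 with hn | hn
  · rw [if_neg hn.not_ge, Nat.div_eq_of_lt hn, if_pos rfl, ite_self]
  · obtain ⟨n, rfl⟩ := Nat.exists_eq_add_of_le hn
    have hdiv : (2 + n) / 2 = n / 2 + 1 := by lia
    simp [hdiv, Nat.even_add]

/-- The power series of `J₀(2x)`. -/
noncomputable def besselSeries : PowerSeries ℚ :=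
  evenSeries fun k => (-1) ^ k / (k.factorial : ℚ) ^ 2

/-- The power series `h` for which `besselSeries * log + h` is a second solution of the
differential equation of `J₀(2x)`. -/
noncomputable def besselSeriesSecond : PowerSeries ℚ :=
  evenSeries fun k => -((-1) ^ k * harmonic k / (k.factorial : ℚ) ^ 2)

theorem seriesEuler_seriesEuler_besselSeries :
    seriesEuler (seriesEuler besselSeries) = -polyToSeries (4 * X ^ 2) * besselSeries := by
  rw [neg_mul, besselSeries, polyToSeries_four_mul_X_sq_mul_evenSeries, seriesEuler_evenSeries,
    seriesEuler_evenSeries, ← map_neg]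
  congr 1
  funext k
  cases k with
  | zero => simp
  | succ k =>
    simp only [Pi.neg_apply, Nat.factorial_succ, Nat.succ_ne_zero, if_false, Nat.add_sub_cancel]
    push_cast
    field_simp
    ring

theorem seriesEuler_seriesEuler_besselSeriesSecond_add :
    seriesEuler (seriesEuler besselSeriesSecond + besselSeries) =
      -polyToSeries (4 * X ^ 2) * besselSeriesSecond - seriesEuler besselSeries := by
  rw [neg_mul, besselSeries, besselSeriesSecond, polyToSeries_four_mul_X_sq_mul_evenSeries,
    seriesEuler_evenSeries, seriesEuler_evenSeries, ← map_neg, ← map_sub, ← map_add,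
    seriesEuler_evenSeries]
  congr 1
  funext k
  cases k with
  | zero => simp
  | succ k =>
    simp only [Pi.add_apply, Pi.sub_apply, Pi.neg_apply, Nat.factorial_succ, Nat.succ_ne_zero,
      if_false, Nat.add_sub_cancel, harmonic_succ]
    push_cast
    field_simp
    ring

theorem isExpType_besselSeries : IsExpType besselSeries := by
  refine ⟨2, fun n => if Even n then (-1) ^ (n / 2) * (n / 2).centralBinom else 0, fun n => ?_⟩
  rw [besselSeries, coeff_evenSeries]
  beta_reduce
  split_ifs with h
  · obtain ⟨k, rfl⟩ := h
    rw [← two_mul, Nat.mul_div_cancel_left _ two_pos]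
    constructor
    · rw [Nat.centralBinom_eq_two_mul_choose]
      push_cast
      rw [Nat.cast_choose ℚ (by lia : k ≤ 2 * k), show 2 * k - k = k by lia]
      field_simp
    · rw [abs_mul, abs_pow, abs_neg, abs_one, one_pow, one_mul, Nat.abs_cast,
        Nat.centralBinom_eq_two_mul_choose]
      exact_mod_cast Nat.choose_le_two_pow _ _
  · exact ⟨by rw [zero_mul, Int.cast_zero], by rw [abs_zero]; positivity⟩

theorem constantCoeff_besselSeries : PowerSeries.constantCoeff besselSeries = 1 := by
  rw [besselSeries, constantCoeff_evenSeries, pow_zero, Nat.factorial_zero, Nat.cast_one, one_pow,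
    div_one]

theorem constantCoeff_seriesEuler (φ : PowerSeries ℚ) :
    PowerSeries.constantCoeff (seriesEuler φ) = 0 := by
  rw [← PowerSeries.coeff_zero_eq_constantCoeff_apply, coeff_seriesEuler, Nat.cast_zero, zero_mul]

theorem besselSeries_wronskian_ne_zero :
    besselSeries * (seriesEuler besselSeriesSecond + besselSeries) -
      seriesEuler besselSeries * besselSeriesSecond ≠ 0 := by
  intro h
  have hcoeff := congrArg PowerSeries.constantCoeff h
  simp only [map_sub, map_mul, map_add, constantCoeff_besselSeries, constantCoeff_seriesEuler,
    map_zero] at hcoeff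
  norm_num at hcoeff

theorem isLogPair_besselSeries :
    IsLogPair laurentEuler (HahnSeries.ofPowerSeries ℤ ℚ (polyToSeries (4 * X ^ 2)))
      (HahnSeries.ofPowerSeries ℤ ℚ besselSeries)
      (HahnSeries.ofPowerSeries ℤ ℚ besselSeriesSecond) where
  ne_zero := by
    refine (map_ne_zero_iff _ HahnSeries.ofPowerSeries_injective).mpr fun h => ?_
    simpa [h] using constantCoeff_besselSeries
  deriv_deriv := by
    rw [laurentEuler_ofPowerSeries, laurentEuler_ofPowerSeries,
      seriesEuler_seriesEuler_besselSeries, map_mul, map_neg]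
  deriv_deriv_log := by
    rw [laurentEuler_ofPowerSeries, ← map_add, laurentEuler_ofPowerSeries,
      seriesEuler_seriesEuler_besselSeriesSecond_add, map_sub, map_mul, map_neg,
      laurentEuler_ofPowerSeries]
  wronskian_ne_zero := by
    rw [laurentEuler_ofPowerSeries, laurentEuler_ofPowerSeries, ← map_add, ← map_mul, ← map_mul,
      ← map_sub]
    exact (map_ne_zero_iff _ HahnSeries.ofPowerSeries_injective).mpr besselSeries_wronskian_ne_zero

theorem det_formMatrix_symSystem_ne_zero {d : ℕ} {P : Fin (d + 1) → ℤ[X]} (hP : P ≠ 0) :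
    (formMatrix (polyEuler ℤ) (symSystem d (4 * X ^ 2)) P).det ≠ 0 := by
  let ψ : ℤ[X] →+* LaurentSeries ℚ := (HahnSeries.ofPowerSeries ℤ ℚ).comp polyToSeries
  have hψ : Function.Injective ψ :=
    HahnSeries.ofPowerSeries_injective.comp polyToSeries_injective
  have : CharZero (LaurentSeries ℚ) := charZero_of_injective_ringHom hψ
  refine noRiccatiSolution_polyEuler.det_formMatrix_ne_zero hψ (fun p => ?_)
    laurentEuler_ne_one isLogPair_besselSeries hP
  rw [RingHom.comp_apply, laurentEuler_ofPowerSeries, seriesEuler_polyToSeries]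
  rfl

theorem isSiegelNormal_besselSeries (d : ℕ) :
    IsSiegelNormal (symSystem d (4 * X ^ 2))
      (binaryMonomials d besselSeries (seriesEuler besselSeries)) where
  isExpType i := (isExpType_besselSeries.pow _).mul (isExpType_besselSeries.seriesEuler.pow _)
  isSolution := by
    rw [symSystem_map]
    exact isSolution_binaryMonomials rfl seriesEuler_seriesEuler_besselSeries d
  exists_constantCoeff_ne_zero := ⟨0, by simp [binaryMonomials, constantCoeff_besselSeries]⟩
  eventually_det_ne_zero :=
    Filter.Eventually.of_forall fun _ _ hP _ _ => det_formMatrix_symSystem_ne_zero hP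

theorem seriesEval_binaryMonomials {φ χ : PowerSeries ℚ} (hφ : IsExpType φ) (hχ : IsExpType χ)
    (z : ℂ) {d : ℕ} (i : Fin (d + 1)) :
    seriesEval z (binaryMonomials d φ χ i) =
      binaryMonomials d (seriesEval z φ) (seriesEval z χ) i := by
  rw [binaryMonomials, seriesEval_mul ((hφ.pow _).summable z) ((hχ.pow _).summable z),
    seriesEval_pow hφ, seriesEval_pow hχ, binaryMonomials]

theorem binaryMonomials_mul_mul {A : Type*} [CommRing A] {d : ℕ} (l x y : A) (i : Fin (d + 1)) :
    binaryMonomials d (l * x) (l * y) i = l ^ d * binaryMonomials d x y i := by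
  rw [binaryMonomials, binaryMonomials, mul_pow, mul_pow, mul_mul_mul_comm, ← pow_add,
    Nat.sub_add_cancel (Nat.lt_succ_iff.mp i.2)]

theorem map_binaryMonomials {A B : Type*} [CommRing A] [CommRing B] (σ : A →+* B) {d : ℕ} (x y : A)
    (i : Fin (d + 1)) : σ (binaryMonomials d x y i) = binaryMonomials d (σ x) (σ y) i := by
  simp only [binaryMonomials, map_mul, map_pow]

theorem binaryMonomials_ne_zero {A : Type*} [CommRing A] [IsReduced A] {d : ℕ} {x y : A}
    (h : x ≠ 0 ∨ y ≠ 0) : binaryMonomials d x y ≠ 0 := by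
  rcases h with h | h
  · exact Function.ne_iff.mpr ⟨0, by simpa [binaryMonomials] using pow_ne_zero d h⟩
  · exact Function.ne_iff.mpr ⟨Fin.last d, by simpa [binaryMonomials] using pow_ne_zero d h⟩

/-- Siegel's bound does not depend on the number `d + 1` of monomials of degree `d` in `J₀` and its
derivative, so it fails once `d` is large compared with the degree of `K`. -/
theorem seriesEuler_besselSeries_ne_of_numberField {K : Type*} [Field K] [NumberField K]
    (σ : K →ₐ[ℚ] ℂ) {α : K} (hα : α ≠ 0) {b₀ b₁ : K} (hb : b₀ ≠ 0 ∨ b₁ ≠ 0) {l : ℂ} (hl : l ≠ 0)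
    (h₀ : seriesEval (σ α) besselSeries = l * σ b₀) :
    seriesEval (σ α) (seriesEuler besselSeries) ≠ l * σ b₁ := by
  intro h₁
  let d := 3 * Module.finrank ℚ K
  have hval (i : Fin (d + 1)) :
      seriesEval (σ α) (binaryMonomials d besselSeries (seriesEuler besselSeries) i) =
        l ^ d * σ (binaryMonomials d b₀ b₁ i) := by
    rw [seriesEval_binaryMonomials isExpType_besselSeries isExpType_besselSeries.seriesEuler, h₀,
      h₁, binaryMonomials_mul_mul]
    exact congrArg (l ^ d * ·) (map_binaryMonomials σ.toRingHom b₀ b₁ i).symm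
  have hlt := (isSiegelNormal_besselSeries d).two_mul_lt σ hα (binaryMonomials_ne_zero hb)
    (pow_ne_zero d hl) hval
  lia

end BesselSeries

/-! ### Bessel functions -/

section Bessel

/-- The terms of the power series `besselClifford`. -/
noncomputable def besselCliffordTerm (ν y : ℝ) (k : ℕ) : ℝ :=
  (-y) ^ k / (k.factorial * Real.Gamma (k + ν + 1))

/-- The entire function `y ^ (-ν / 2) * J_ν(2 * √y)` of `y`, which for `0 < y` has the same zeros as
`J_ν(2 * √y)`. -/
noncomputable def besselClifford (ν y : ℝ) : ℝ :=
  ∑' k, besselCliffordTerm ν y k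

theorem besselJ_two_mul (ν : ℝ) {x : ℝ} (hx : 0 < x) :
    besselJ ν (2 * x) = x ^ ν * besselClifford ν (x ^ 2) := by
  rw [besselJ, besselClifford, ← tsum_mul_left]
  refine tsum_congr fun k => ?_
  rw [mul_div_cancel_left₀ x two_ne_zero, Real.rpow_add hx, Real.rpow_mul hx.le, Real.rpow_natCast,
    Real.rpow_ofNat, besselCliffordTerm, neg_pow]
  ring

theorem besselJ_eq_zero_iff (ν : ℝ) {r : ℝ} (hr : 0 < r) :
    besselJ ν r = 0 ↔ besselClifford ν ((r / 2) ^ 2) = 0 := by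
  have hJ := besselJ_two_mul ν (half_pos hr)
  rw [mul_div_cancel₀ r two_ne_zero] at hJ
  rw [hJ, mul_eq_zero_iff_left (Real.rpow_pos_of_pos (half_pos hr) ν).ne']

theorem pow_mul_Gamma_le {s : ℝ} (hs : 0 < s) (k : ℕ) :
    s ^ k * Real.Gamma s ≤ Real.Gamma (k + s) := by
  induction k with
  | zero => rw [pow_zero, one_mul, Nat.cast_zero, zero_add]
  | succ k ih =>
    have hk : 0 < (k : ℝ) + s := by positivity
    rw [Nat.cast_succ, add_right_comm, Real.Gamma_add_one hk.ne', pow_succ', mul_assoc]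
    exact mul_le_mul (le_add_of_nonneg_left k.cast_nonneg) ih
      (mul_nonneg (pow_nonneg hs.le k) (Real.Gamma_pos_of_pos hs).le) hk.le

variable {ν : ℝ}

theorem abs_besselCliffordTerm_le (hν : -1 < ν) (y : ℝ) (k : ℕ) :
    |besselCliffordTerm ν y k| ≤
      (|y| / (ν + 1)) ^ k / k.factorial * (Real.Gamma (ν + 1))⁻¹ := by
  have hν1 : 0 < ν + 1 := neg_lt_iff_pos_add.mp hν
  have : 0 < Real.Gamma (ν + 1) := Real.Gamma_pos_of_pos hν1
  have hΓk : 0 < Real.Gamma (k + ν + 1) := Real.Gamma_pos_of_pos (by rw [add_assoc]; positivity)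
  rw [besselCliffordTerm, abs_div, abs_pow, abs_neg, abs_mul, Nat.abs_cast, abs_of_pos hΓk]
  calc |y| ^ k / (k.factorial * Real.Gamma (k + ν + 1))
      ≤ |y| ^ k / (k.factorial * ((ν + 1) ^ k * Real.Gamma (ν + 1))) := by
        gcongr
        rw [add_assoc]
        exact pow_mul_Gamma_le hν1 k
    _ = (|y| / (ν + 1)) ^ k / k.factorial * (Real.Gamma (ν + 1))⁻¹ := by
        rw [div_pow]
        field_simp

theorem summable_besselCliffordTerm (hν : -1 < ν) (y : ℝ) : Summable (besselCliffordTerm ν y) :=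
  Summable.of_abs (((Real.summable_pow_div_factorial _).mul_right _).of_nonneg_of_le
    (fun _ => abs_nonneg _) (abs_besselCliffordTerm_le hν y))

theorem besselCliffordTerm_zero (hν : -1 < ν) (y : ℝ) :
    besselCliffordTerm ν y 0 = (ν + 1) * besselCliffordTerm (ν + 1) y 0 := by
  have hν1 : 0 < ν + 1 := neg_lt_iff_pos_add.mp hν
  have hΓ := (Real.Gamma_pos_of_pos hν1).ne'
  simp only [besselCliffordTerm, Nat.factorial_zero, pow_zero, Nat.cast_zero, zero_add,
    Nat.cast_one, one_mul]
  rw [Real.Gamma_add_one hν1.ne']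
  field_simp

theorem besselCliffordTerm_succ (hν : -1 < ν) (y : ℝ) (k : ℕ) :
    besselCliffordTerm ν y (k + 1) + y * besselCliffordTerm (ν + 2) y k =
      (ν + 1) * besselCliffordTerm (ν + 1) y (k + 1) := by
  have hk : 0 < (k : ℝ) + ν + 2 := by linarith [k.cast_nonneg (α := ℝ)]
  have hΓ := (Real.Gamma_pos_of_pos hk).ne'
  simp only [besselCliffordTerm]
  rw [show ((k + 1 : ℕ) : ℝ) + ν + 1 = k + ν + 2 by push_cast; ring,
    show ((k + 1 : ℕ) : ℝ) + (ν + 1) + 1 = (k + ν + 2) + 1 by push_cast; ring,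
    show (k : ℝ) + (ν + 2) + 1 = (k + ν + 2) + 1 by ring, Real.Gamma_add_one hk.ne',
    Nat.factorial_succ]
  push_cast
  field_simp
  ring

theorem besselClifford_add_mul_besselClifford_add_two (hν : -1 < ν) (y : ℝ) :
    besselClifford ν y + y * besselClifford (ν + 2) y = (ν + 1) * besselClifford (ν + 1) y := by
  have hs₀ := summable_besselCliffordTerm hν y
  have hs₁ := summable_besselCliffordTerm (show -1 < ν + 1 by linarith) y
  have hs₂ := summable_besselCliffordTerm (show -1 < ν + 2 by linarith) y
  simp only [besselClifford]
  rw [hs₀.tsum_eq_zero_add, hs₁.tsum_eq_zero_add, mul_add, ← tsum_mul_left, ← tsum_mul_left,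
    add_assoc, ← ((summable_nat_add_iff 1).mpr hs₀).tsum_add (hs₂.mul_left y),
    besselCliffordTerm_zero hν]
  exact congrArg _ (tsum_congr (besselCliffordTerm_succ hν y))

theorem abs_besselClifford_sub_inv_Gamma_le (hν : -1 < ν) (y : ℝ) :
    |besselClifford ν y - (Real.Gamma (ν + 1))⁻¹| ≤
      (Real.exp (|y| / (ν + 1)) - 1) * (Real.Gamma (ν + 1))⁻¹ := by
  have hexp : HasSum (fun k : ℕ => (|y| / (ν + 1)) ^ k / k.factorial)
      (Real.exp (|y| / (ν + 1))) := by
    rw [Real.exp_eq_exp_ℝ]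
    exact NormedSpace.expSeries_div_hasSum_exp _
  have htail := (hasSum_nat_add_iff' 1).mpr hexp
  rw [Finset.sum_range_one, pow_zero, Nat.factorial_zero, Nat.cast_one, div_one] at htail
  have hzero : besselCliffordTerm ν y 0 = (Real.Gamma (ν + 1))⁻¹ := by
    simp only [besselCliffordTerm, pow_zero, Nat.factorial_zero, Nat.cast_one, one_mul,
      Nat.cast_zero, zero_add, one_div]
  rw [besselClifford, (summable_besselCliffordTerm hν y).tsum_eq_zero_add, hzero,
    add_sub_cancel_left]
  exact tsum_of_norm_bounded (f := fun k => besselCliffordTerm ν y (k + 1)) (htail.mul_right _)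
    fun k => abs_besselCliffordTerm_le hν y (k + 1)

theorem besselClifford_ne_zero {y : ℝ} (hν : -1 < ν) (hy : |y| < (ν + 1) * Real.log 2) :
    besselClifford ν y ≠ 0 := by
  intro h
  have hν1 : 0 < ν + 1 := neg_lt_iff_pos_add.mp hν
  have hΓ : 0 < (Real.Gamma (ν + 1))⁻¹ := inv_pos.mpr (Real.Gamma_pos_of_pos hν1)
  have hle := abs_besselClifford_sub_inv_Gamma_le hν y
  rw [h, zero_sub, abs_neg, abs_of_pos hΓ, le_mul_iff_one_le_left hΓ] at hle
  have hlt : Real.exp (|y| / (ν + 1)) < 2 :=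
    (Real.lt_log_iff_exp_lt two_pos).mp ((div_lt_iff₀' hν1).mpr hy)
  linarith

end Bessel

section SpecialOrders

theorem seriesEval_evenSeries (u : ℕ → ℚ) (z : ℂ) :
    seriesEval z (evenSeries u) = ∑' k, (u k : ℂ) * (z ^ 2) ^ k := by
  rw [seriesEval, ← (mul_right_injective₀ (two_ne_zero' ℕ)).tsum_eq]
  · refine tsum_congr fun k => ?_
    rw [coeff_evenSeries, if_pos (even_two_mul k), Nat.mul_div_cancel_left k two_pos, pow_mul]
  · intro n hn
    rcases Nat.even_or_odd' n with ⟨k, rfl | rfl⟩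
    · exact ⟨k, rfl⟩
    · exact absurd (by simp [coeff_evenSeries]) hn

theorem besselCliffordTerm_natCast (n : ℕ) (y : ℝ) (k : ℕ) :
    besselCliffordTerm n y k = (-y) ^ k / (k.factorial * (k + n).factorial) := by
  rw [besselCliffordTerm, ← Real.Gamma_nat_eq_factorial (k + n), Nat.cast_add]

theorem seriesEval_besselSeries (x : ℝ) :
    seriesEval x besselSeries = (besselClifford 0 (x ^ 2) : ℂ) := by
  rw [besselSeries, seriesEval_evenSeries, besselClifford, Complex.ofReal_tsum]
  refine tsum_congr fun k => ?_
  rw [← Nat.cast_zero, besselCliffordTerm_natCast, add_zero, neg_pow]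
  push_cast
  ring

theorem seriesEval_seriesEuler_besselSeries (x : ℝ) :
    seriesEval x (seriesEuler besselSeries) = -2 * x ^ 2 * (besselClifford 1 (x ^ 2) : ℂ) := by
  rw [besselSeries, seriesEuler_evenSeries, seriesEval_evenSeries, besselClifford,
    Complex.ofReal_tsum, ← tsum_mul_left, ← Nat.succ_injective.tsum_eq]
  · refine tsum_congr fun k => ?_
    rw [← Nat.cast_one (R := ℝ), besselCliffordTerm_natCast, Nat.succ_eq_add_one,
      neg_pow (x ^ 2)]
    push_cast [Nat.factorial_succ]
    field_simp
    ring
  · intro n hn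
    cases n with
    | zero => exact absurd (by simp) hn
    | succ n => exact ⟨n, rfl⟩

theorem factorial_mul_Gamma_add_half (k : ℕ) :
    k.factorial * Real.Gamma (k + 1 / 2) = (2 * k).factorial * √Real.pi / 4 ^ k := by
  have h := Real.Gamma_mul_Gamma_add_half (k + 1 / 2)
  rw [add_assoc, add_halves, Real.Gamma_nat_eq_factorial,
    show 2 * ((k : ℝ) + 1 / 2) = (2 * k : ℕ) + 1 by push_cast; ring,
    Real.Gamma_nat_eq_factorial, sub_add_cancel_right, Real.rpow_neg two_pos.le,
    Real.rpow_natCast, pow_mul, show (2 : ℝ) ^ 2 = 4 by norm_num] at h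
  rw [mul_comm, h]
  ring

theorem factorial_mul_Gamma_add_half_add_one (k : ℕ) :
    k.factorial * Real.Gamma (k + 1 / 2 + 1) =
      (2 * k + 1).factorial * √Real.pi / (2 * 4 ^ k) := by
  rw [Real.Gamma_add_one (by positivity), mul_left_comm, factorial_mul_Gamma_add_half,
    Nat.factorial_succ]
  push_cast
  field_simp

theorem besselClifford_neg_half (x : ℝ) :
    besselClifford (-1 / 2) (x ^ 2) = Real.cos (2 * x) / √Real.pi := by
  rw [eq_div_iff (by positivity), Real.cos_eq_tsum, besselClifford, ← tsum_mul_right]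
  refine tsum_congr fun k => ?_
  rw [besselCliffordTerm, show (k : ℝ) + -1 / 2 + 1 = k + 1 / 2 by ring,
    factorial_mul_Gamma_add_half, neg_pow, mul_pow, pow_mul, pow_mul,
    show (2 : ℝ) ^ 2 = 4 by norm_num]
  field_simp

theorem mul_besselClifford_half (x : ℝ) :
    x * besselClifford (1 / 2) (x ^ 2) = Real.sin (2 * x) / √Real.pi := by
  rw [eq_div_iff (by positivity), Real.sin_eq_tsum, besselClifford, ← tsum_mul_left,
    ← tsum_mul_right]
  refine tsum_congr fun k => ?_
  rw [besselCliffordTerm, factorial_mul_Gamma_add_half_add_one, neg_pow, mul_pow, pow_succ 2,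
    pow_mul 2, show (2 : ℝ) ^ 2 = 4 by norm_num]
  field_simp
  ring

theorem exp_two_mul_I_div_sqrt_pi (x : ℝ) :
    Complex.exp (2 * x * Complex.I) / √Real.pi =
      besselClifford (-1 / 2) (x ^ 2) + x * Complex.I * besselClifford (1 / 2) (x ^ 2) := by
  rw [mul_right_comm (x : ℂ), ← Complex.ofReal_mul, mul_besselClifford_half,
    besselClifford_neg_half, Complex.exp_mul_I]
  push_cast
  ring

end SpecialOrders

/-! ### Common zeros -/

section Recurrence

theorem mem_of_recurrence_backward {R M : Type*} [CommRing R] [AddCommGroup M] [Module R M]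
    {N : Submodule R M} {y : R} {c : ℕ → R} {t : ℕ → M}
    (h : ∀ j, t j + y • t (j + 2) = c j • t (j + 1)) {n : ℕ} (hn : t n ∈ N)
    (hn' : t (n + 1) ∈ N) : t 0 ∈ N ∧ t 1 ∈ N := by
  induction n with
  | zero => exact ⟨hn, hn'⟩
  | succ n ih =>
    refine ih ?_ hn
    rw [eq_sub_of_add_eq (h n)]
    exact N.sub_mem (N.smul_mem _ hn) (N.smul_mem _ hn')

theorem eq_zero_of_recurrence_forward {R M : Type*} [CommRing R] [IsDomain R] [AddCommGroup M]
    [Module R M] [Module.IsTorsionFree R M] {y : R} {c : ℕ → R} {t : ℕ → M}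
    (h : ∀ j, t j + y • t (j + 2) = c j • t (j + 1)) (hy : y ≠ 0) (h₀ : t 0 = 0) (h₁ : t 1 = 0)
    (j : ℕ) : t j = 0 ∧ t (j + 1) = 0 := by
  induction j with
  | zero => exact ⟨h₀, h₁⟩
  | succ j ih =>
    have hj := h j
    rw [ih.1, ih.2, zero_add, smul_zero] at hj
    exact ⟨ih.2, (smul_eq_zero.mp hj).resolve_left hy⟩

/-- The Lommel polynomials of the recurrence `t j + y * t (j + 2) = c j * t (j + 1)`: they express
the solution vanishing at `0` through its value at `1`. -/
noncomputable def lommelPoly {R : Type*} [CommRing R] (c : ℕ → R) : ℕ → R[X]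
  | 0 => 1
  | 1 => C (c 0)
  | k + 2 => C (c (k + 1)) * lommelPoly c (k + 1) - X * lommelPoly c k

theorem coeff_zero_lommelPoly {R : Type*} [CommRing R] (c : ℕ → R) (k : ℕ) :
    (lommelPoly c k).coeff 0 = ∏ j ∈ Finset.range k, c j := by
  induction k using Nat.twoStepInduction with
  | zero => rw [lommelPoly, coeff_one_zero, Finset.prod_range_zero]
  | one => rw [lommelPoly, coeff_C_zero, Finset.prod_range_one]
  | more k _ ih =>
    rw [lommelPoly, coeff_sub, mul_coeff_zero, coeff_C_zero, coeff_X_mul_zero, sub_zero, ih,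
      mul_comm, ← Finset.prod_range_succ]

variable {R A : Type*} [CommRing R] [CommRing A] [Algebra R A] {y : A} {c : ℕ → R} {t : ℕ → A}

theorem pow_mul_eq_aeval_lommelPoly_mul
    (h : ∀ j, t j + y * t (j + 2) = algebraMap R A (c j) * t (j + 1)) (h₀ : t 0 = 0) (k : ℕ) :
    y ^ k * t (k + 1) = aeval y (lommelPoly c k) * t 1 := by
  induction k using Nat.twoStepInduction with
  | zero => rw [lommelPoly, map_one, pow_zero]
  | one =>
    rw [lommelPoly, aeval_C, ← h 0, h₀, zero_add, pow_one]
  | more k ih₀ ih₁ =>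
    rw [lommelPoly, map_sub, map_mul, map_mul, aeval_C, aeval_X]
    linear_combination
      y ^ (k + 1) * h (k + 1) - y * ih₀ + algebraMap R A (c (k + 1)) * ih₁

theorem isAlgebraic_of_recurrence [IsDomain R] [IsDomain A]
    (h : ∀ j, t j + y * t (j + 2) = algebraMap R A (c j) * t (j + 1)) (hc : ∀ j, c j ≠ 0)
    (h₀ : t 0 = 0) (h₁ : t 1 ≠ 0) {k : ℕ} (hk : t (k + 1) = 0) : IsAlgebraic R y := by
  refine ⟨lommelPoly c k, fun hzero => ?_, ?_⟩
  · have hcoeff := coeff_zero_lommelPoly c k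
    rw [hzero, coeff_zero] at hcoeff
    exact Finset.prod_ne_zero_iff.mpr (fun j _ => hc j) hcoeff.symm
  · have hlommel := pow_mul_eq_aeval_lommelPoly_mul h h₀ k
    rw [hk, mul_zero] at hlommel
    exact (mul_eq_zero.mp hlommel.symm).resolve_right h₁

end Recurrence

section CommonZeros

theorem besselClifford_recurrence {ν : ℝ} (hν : -1 < ν) (y : ℝ) (j : ℕ) :
    besselClifford (ν + j) y + y * besselClifford (ν + (j + 2 : ℕ)) y =
      (ν + j + 1) * besselClifford (ν + (j + 1 : ℕ)) y := by
  have hrec := besselClifford_add_mul_besselClifford_add_two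
    (hν.trans_le (le_add_of_nonneg_right j.cast_nonneg)) y
  push_cast
  rwa [← add_assoc, ← add_assoc]

theorem besselClifford_add_one_ne_zero {ν y : ℝ} (hν : -1 < ν) (hy : y ≠ 0)
    (h : besselClifford ν y = 0) : besselClifford (ν + 1) y ≠ 0 := by
  intro h'
  obtain ⟨j, hj⟩ := exists_nat_gt (|y| / Real.log 2)
  rw [div_lt_iff₀ (Real.log_pos one_lt_two)] at hj
  refine besselClifford_ne_zero (ν := ν + j) (hν.trans_le (le_add_of_nonneg_right j.cast_nonneg))
    (hj.trans_le ?_) (eq_zero_of_recurrence_forward (t := fun j : ℕ => besselClifford (ν + j) y)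
      (besselClifford_recurrence hν y) hy ?_ ?_ j).1
  · have := Real.log_pos one_lt_two
    gcongr
    linarith
  · rwa [Nat.cast_zero, add_zero]
  · rwa [Nat.cast_one]

theorem isAlgebraic_of_besselClifford_eq_zero {ν : ℚ} (hν : -1 < ν) {y : ℝ} (hy : y ≠ 0) {p : ℕ}
    (hp : p ≠ 0) (h₀ : besselClifford ν y = 0) (h₁ : besselClifford (ν + p) y = 0) :
    IsAlgebraic ℚ y := by
  obtain ⟨k, rfl⟩ := Nat.exists_eq_succ_of_ne_zero hp
  have hν' : (-1 : ℝ) < ν := by exact_mod_cast hν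
  refine isAlgebraic_of_recurrence (t := fun j : ℕ => besselClifford (ν + j) y)
    (c := fun j => ν + j + 1) (fun j => ?_) (fun j => ?_) ?_ ?_ h₁
  · rw [besselClifford_recurrence hν' y j, eq_ratCast]
    push_cast
    rfl
  · linarith [j.cast_nonneg (α := ℚ)]
  · rwa [Nat.cast_zero, add_zero]
  · rw [Nat.cast_one]
    exact besselClifford_add_one_ne_zero hν' hy h₀

open Submodule in
theorem besselClifford_mem_span {ν : ℚ} (hν : -1 < ν) {F : IntermediateField ℚ ℂ} {y : ℝ}
    (hy : (y : ℂ) ∈ F) {n : ℕ} (h : besselClifford (ν + n) y = 0) :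
    (besselClifford ν y : ℂ) ∈ span F {(besselClifford (ν + (n + 1 : ℕ)) y : ℂ)} ∧
      (besselClifford (ν + 1) y : ℂ) ∈ span F {(besselClifford (ν + (n + 1 : ℕ)) y : ℂ)} := by
  have hrec (j : ℕ) : (besselClifford (ν + j) y : ℂ) +
      (⟨y, hy⟩ : F) • (besselClifford (ν + (j + 2 : ℕ)) y : ℂ) =
        ((ν + j + 1 : ℚ) : F) • (besselClifford (ν + (j + 1 : ℕ)) y : ℂ) := by
    have hj := besselClifford_recurrence (ν := ν) (by exact_mod_cast hν) y j
    simp only [IntermediateField.smul_def, smul_eq_mul]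
    push_cast
    exact_mod_cast hj
  have hmem := mem_of_recurrence_backward (t := fun j : ℕ => (besselClifford (ν + j) y : ℂ)) hrec
    (N := span F {(besselClifford (ν + (n + 1 : ℕ)) y : ℂ)}) (n := n) (by
      rw [h, Complex.ofReal_zero]
      exact zero_mem _) (mem_span_singleton_self _)
  simpa only [Nat.cast_zero, add_zero, Nat.cast_one] using hmem

theorem numberField_adjoin {s : Set ℂ} [Finite s] (hs : ∀ z ∈ s, IsAlgebraic ℚ z) :
    NumberField (IntermediateField.adjoin ℚ s) where
  to_charZero := inferInstance
  to_finiteDimensional := IntermediateField.finiteDimensional_adjoin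
    fun z hz => (hs z hz).isIntegral

variable {F : IntermediateField ℚ ℂ}

theorem div_mem_of_mem_span_singleton {l u v : ℂ} (hu : u ∈ Submodule.span F {l})
    (hv : v ∈ Submodule.span F {l}) : u / v ∈ F := by
  obtain ⟨a, rfl⟩ := Submodule.mem_span_singleton.mp hu
  obtain ⟨b, rfl⟩ := Submodule.mem_span_singleton.mp hv
  rw [IntermediateField.smul_def, IntermediateField.smul_def, smul_eq_mul, smul_eq_mul]
  rcases eq_or_ne l 0 with rfl | hl
  · rw [mul_zero, zero_div]
    exact F.zero_mem
  · rw [mul_div_mul_right _ _ hl]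
    exact F.div_mem a.2 b.2

variable [NumberField F] {x : ℝ} {l : ℂ}

theorem besselClifford_one_notMem_span (hx : x ≠ 0) (hxF : (x : ℂ) ∈ F)
    (h₀ : (besselClifford 0 (x ^ 2) : ℂ) ∈ Submodule.span F {l}) :
    (besselClifford 1 (x ^ 2) : ℂ) ∉ Submodule.span F {l} := by
  intro h₁
  obtain ⟨b₀, hb₀⟩ := Submodule.mem_span_singleton.mp h₀
  obtain ⟨b₁, hb₁⟩ := Submodule.mem_span_singleton.mp h₁
  let α : F := ⟨x, hxF⟩
  have hα : α ≠ 0 := fun h => hx (Complex.ofReal_eq_zero.mp (congrArg Subtype.val h))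
  have hne : b₀ • l ≠ 0 ∨ b₁ • l ≠ 0 := by
    rw [hb₀, hb₁, Complex.ofReal_ne_zero, Complex.ofReal_ne_zero]
    have h := besselClifford_add_one_ne_zero (ν := 0) (y := x ^ 2) (by norm_num) (pow_ne_zero 2 hx)
    rw [zero_add] at h
    exact or_iff_not_imp_left.mpr fun h0 => h (not_not.mp h0)
  have hl : l ≠ 0 := hne.elim right_ne_zero_of_smul right_ne_zero_of_smul
  have hb : b₀ ≠ 0 ∨ -2 * α ^ 2 * b₁ ≠ 0 := by
    refine hne.imp left_ne_zero_of_smul fun h => ?_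
    exact mul_ne_zero (mul_ne_zero (by norm_num) (pow_ne_zero 2 hα)) (left_ne_zero_of_smul h)
  refine seriesEuler_besselSeries_ne_of_numberField (algebraMap F ℂ).toRatAlgHom hα hb hl ?_ ?_
  · exact (seriesEval_besselSeries x).trans (hb₀.symm.trans (mul_comm _ _))
  · refine (seriesEval_seriesEuler_besselSeries x).trans ?_
    have hval : (algebraMap F ℂ).toRatAlgHom (-2 * α ^ 2 * b₁) = -2 * x ^ 2 * b₁ := rfl
    rw [← hb₁, IntermediateField.smul_def, smul_eq_mul, hval]
    ring

theorem besselClifford_half_notMem_span (hI : Complex.I ∈ F) (hx : x ≠ 0) (hxF : (x : ℂ) ∈ F)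
    (h₀ : (besselClifford (-1 / 2) (x ^ 2) : ℂ) ∈ Submodule.span F {l}) :
    (besselClifford (1 / 2) (x ^ 2) : ℂ) ∉ Submodule.span F {l} := by
  intro h₁
  have hexp (a : ℝ) (ha : a ^ 2 = x ^ 2) (haF : (a : ℂ) ∈ F) :
      Complex.exp (2 * a * Complex.I) / √Real.pi ∈ Submodule.span F {l} := by
    rw [exp_two_mul_I_div_sqrt_pi, ha]
    exact add_mem h₀ (Submodule.smul_mem _ (⟨_, F.mul_mem haF hI⟩ : F) h₁)
  have hdiv := div_mem_of_mem_span_singleton (hexp x rfl hxF)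
    (hexp (-x) (neg_sq x) (by rw [Complex.ofReal_neg]; exact F.neg_mem hxF))
  rw [div_div_div_cancel_right₀ (by exact_mod_cast (by positivity : √Real.pi ≠ 0)),
    ← Complex.exp_sub] at hdiv
  have hz : 2 * x * Complex.I - 2 * (-x : ℝ) * Complex.I = 4 * (x * Complex.I) := by
    push_cast
    ring
  rw [hz] at hdiv
  have hzF : 4 * (x * Complex.I) ∈ F := F.mul_mem (ofNat_mem F 4) (F.mul_mem hxF hI)
  have hz₀ : 4 * (x * Complex.I) ≠ 0 :=
    mul_ne_zero (by norm_num) (mul_ne_zero (Complex.ofReal_ne_zero.mpr hx) Complex.I_ne_zero)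
  exact exp_ne_of_numberField (algebraMap F ℂ).toRatAlgHom (α := ⟨_, hzF⟩)
    (fun h => hz₀ (congrArg Subtype.val h)) ⟨_, hdiv⟩ rfl

theorem besselClifford_add_one_notMem_span {ν : ℚ} (hν : ν = 0 ∨ ν = -1 / 2) (hI : Complex.I ∈ F)
    (hx : x ≠ 0) (hxF : (x : ℂ) ∈ F)
    (h₀ : (besselClifford ν (x ^ 2) : ℂ) ∈ Submodule.span F {l}) :
    (besselClifford (ν + 1) (x ^ 2) : ℂ) ∉ Submodule.span F {l} := by
  rcases hν with rfl | rfl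
  · rw [Rat.cast_zero] at h₀ ⊢
    rw [zero_add]
    exact besselClifford_one_notMem_span hx hxF h₀
  · have hcast : ((-1 / 2 : ℚ) : ℝ) = -1 / 2 := by norm_num
    have hadd : (-1 / 2 : ℝ) + 1 = 1 / 2 := by norm_num
    rw [hcast] at h₀ ⊢
    rw [hadd]
    exact besselClifford_half_notMem_span hI hx hxF h₀

theorem besselClifford_add_natCast_ne_zero {ν : ℚ} (hν : ν = 0 ∨ ν = -1 / 2) {x : ℝ} (hx : x ≠ 0)
    (n : ℕ) {p : ℕ} (hp : p ≠ 0) (h₀ : besselClifford (ν + n) (x ^ 2) = 0) :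
    besselClifford (ν + n + p) (x ^ 2) ≠ 0 := by
  intro h₁
  have hν' : -1 < ν := by rcases hν with rfl | rfl <;> norm_num
  have hx_alg : IsAlgebraic ℚ x := by
    refine .of_pow two_pos
      (isAlgebraic_of_besselClifford_eq_zero (ν := ν + n) ?_ (pow_ne_zero 2 hx) hp ?_ ?_)
    · exact hν'.trans_le (le_add_of_nonneg_right n.cast_nonneg)
    · exact_mod_cast h₀
    · exact_mod_cast h₁
  have hI_alg : IsAlgebraic ℚ Complex.I :=
    IsIntegral.isAlgebraic ⟨X ^ 2 + 1, by monicity!, by simp⟩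
  let F := IntermediateField.adjoin ℚ {(x : ℂ), Complex.I}
  have hxF : (x : ℂ) ∈ F := IntermediateField.subset_adjoin ℚ _ (by simp)
  have hIF : Complex.I ∈ F := IntermediateField.subset_adjoin ℚ _ (by simp)
  have : NumberField F := numberField_adjoin <| by
    rintro z (rfl | rfl)
    exacts [hx_alg.algHom (Complex.ofRealAm.restrictScalars ℚ), hI_alg]
  obtain ⟨hspan₀, hspan₁⟩ := besselClifford_mem_span hν' (F := F) (y := x ^ 2)
    (by rw [Complex.ofReal_pow]; exact F.pow_mem hxF 2) h₀
  exact besselClifford_add_one_notMem_span hν hIF hx hxF hspan₀ hspan₁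

theorem exists_eq_add_natCast {ν : ℝ} {n : ℕ} (hν : 2 * ν + 1 = n) :
    ∃ ν₀ : ℚ, (ν₀ = 0 ∨ ν₀ = -1 / 2) ∧ ∃ m : ℕ, ν = ν₀ + m := by
  obtain ⟨m, rfl | rfl⟩ := n.even_or_odd'
  · refine ⟨-1 / 2, .inr rfl, m, ?_⟩
    push_cast at hν ⊢
    linarith
  · refine ⟨0, .inl rfl, m, ?_⟩
    push_cast at hν ⊢
    linarith

end CommonZeros

theorem besselJ_no_common_zeros_general {ν r : ℝ} {n : ℕ} (hν : 2 * ν + 1 = n) (hr : 0 < r)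
    {p : ℕ} (hp : p ≠ 0) (h : besselJ ν r = 0) : besselJ (ν + p) r ≠ 0 := by
  obtain ⟨ν₀, hν₀, m, rfl⟩ := exists_eq_add_natCast hν
  rw [besselJ_eq_zero_iff _ hr] at h
  rw [Ne, besselJ_eq_zero_iff _ hr]
  exact besselClifford_add_natCast_ne_zero hν₀ (half_pos hr).ne' m hp h

theorem besselJ_no_common_zeros (d ℓ p : ℕ) (hd : 2 ≤ d) (hp : 1 ≤ p) :
    ¬ ∃ r : ℝ, 0 < r ∧ besselJ ((ℓ : ℝ) + (d : ℝ) / 2 - 1) r = 0 ∧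
      besselJ ((ℓ : ℝ) + (p : ℝ) + (d : ℝ) / 2 - 1) r = 0 := by
  rintro ⟨r, hr, h₀, h₁⟩
  obtain ⟨m, rfl⟩ := Nat.exists_eq_add_of_le' hd
  refine besselJ_no_common_zeros_general (n := 2 * ℓ + m + 1) (by push_cast; ring) hr
    (Nat.one_le_iff_ne_zero.mp hp) h₀ ?_
  rwa [show (ℓ : ℝ) + (m + 2 : ℕ) / 2 - 1 + p = ℓ + p + (m + 2 : ℕ) / 2 - 1 by ring]
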